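/- Let 𝔥 be a complex Hilbert space of dimension greater than two and let d be a bounded decoherence functional for 𝔥, with β the associated linear functional on K(𝔥) • K(𝔥). Then there exist families of trace class operators {𝔛ᵢ}_{i∈I} and {𝔜ᵢ}_{i∈I} on 𝔥 such that for each x and y in K(𝔥), the sums Σ_{i∈I} |tr(x𝔛ᵢ)|² and Σ_{i∈I} |tr(y𝔜ᵢ)|² are convergent, and for all S ∈ K(𝔥) • K(𝔥), β(S) = Σ_{i∈I} tr(S(𝔛ᵢ ⊗ 𝔛ᵢ* − 𝔜ᵢ ⊗ 𝔜ᵢ*)), where the series is absolutely convergent. -/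

import Mathlib

/- Common background definitions: decoherence functionals on the projection
lattice of a complex Hilbert space, boundedness/additivity notions, trace class
operators, and an axiomatisation of the Hilbert space tensor product
`𝔥 ⊗ 𝔥` together with the operator tensor product. -/

noncomputable section

open scoped ComplexInnerProductSpace ComplexOrder
open ContinuousLinearMap

universe u

variable {E : Type u} [NormedAddCommGroup E] [InnerProductSpace ℂ E] [CompleteSpace E]
variable {G : Type u} [NormedAddCommGroup G] [InnerProductSpace ℂ G] [CompleteSpace G]

/-- `p` is an orthogonal projection on a Hilbert space. -/
def IsOrthoProj (p : E →L[ℂ] E) : Prop :=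
  IsIdempotentElem p ∧ IsSelfAdjoint p

/-- `p` is an operator of finite rank. -/
def HasFiniteRank (p : E →L[ℂ] E) : Prop :=
  FiniteDimensional ℂ ↥(LinearMap.range (p : E →ₗ[ℂ] E))

/-- A decoherence functional on the lattice of projections `P(𝔥)`
(modelled as a function on all pairs of bounded operators whose defining
properties refer only to its values at pairs of orthogonal projections). -/
structure IsDecoherenceFunctional (d : (E →L[ℂ] E) → (E →L[ℂ] E) → ℂ) : Prop where
  hermitian : ∀ p q, IsOrthoProj p → IsOrthoProj q → d p q = starRingEnd ℂ (d q p)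
  pos : ∀ p, IsOrthoProj p → 0 ≤ d p p
  normalized : d 1 1 = 1
  orthoadd : ∀ p₁ p₂ q, IsOrthoProj p₁ → IsOrthoProj p₂ → IsOrthoProj q →
    p₁ * p₂ = 0 → d (p₁ + p₂) q = d p₁ q + d p₂ q

/-- A decoherence functional is bounded if `{|d(p,q)|}` is a bounded set. -/
def DFBounded (d : (E →L[ℂ] E) → (E →L[ℂ] E) → ℂ) : Prop :=
  ∃ C : ℝ, ∀ p q, IsOrthoProj p → IsOrthoProj q → ‖d p q‖ ≤ C

/-- Countable additivity of a decoherence functional: for every countable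
pairwise orthogonal family of projections summing (strongly) to `P`,
`d (P, q) = ∑ d (pᵢ, q)`. -/
def DFCountablyAdditive (d : (E →L[ℂ] E) → (E →L[ℂ] E) → ℂ) : Prop :=
  ∀ (p : ℕ → E →L[ℂ] E) (P q : E →L[ℂ] E),
    (∀ i, IsOrthoProj (p i)) → IsOrthoProj P → IsOrthoProj q →
    (∀ i j, i ≠ j → p i * p j = 0) →
    (∀ x : E, HasSum (fun i => p i x) (P x)) →
    HasSum (fun i => d (p i) q) (d P q)

/-- Complete additivity of a decoherence functional. -/
def DFCompletelyAdditive (d : (E →L[ℂ] E) → (E →L[ℂ] E) → ℂ) : Prop :=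
  ∀ (ι : Type u) (p : ι → E →L[ℂ] E) (P q : E →L[ℂ] E),
    (∀ i, IsOrthoProj (p i)) → IsOrthoProj P → IsOrthoProj q →
    (∀ i j, i ≠ j → p i * p j = 0) →
    (∀ x : E, HasSum (fun i => p i x) (P x)) →
    HasSum (fun i => d (p i) q) (d P q)

/-- A bilinear form `D` on `B(𝔥) × B(𝔥)` is bounded. -/
def IsBoundedBilinear (D : (E →L[ℂ] E) →ₗ[ℂ] (E →L[ℂ] E) →ₗ[ℂ] ℂ) : Prop :=
  ∃ C : ℝ, ∀ x y : E →L[ℂ] E, ‖D x y‖ ≤ C * ‖x‖ * ‖y‖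

/-- The bilinear form `D` extends the decoherence functional `d`. -/
def ExtendsDF (D : (E →L[ℂ] E) →ₗ[ℂ] (E →L[ℂ] E) →ₗ[ℂ] ℂ)
    (d : (E →L[ℂ] E) → (E →L[ℂ] E) → ℂ) : Prop :=
  ∀ p q, IsOrthoProj p → IsOrthoProj q → D p q = d p q

/-- `T` is a trace class operator (via the standard characterisation: the sums
`∑ |⟪eᵢ, T fᵢ⟫|` over finite orthonormal families are uniformly bounded). -/
def IsTraceClass (T : E →L[ℂ] E) : Prop :=
  ∃ C : ℝ, ∀ (n : ℕ) (e f : Fin n → E), Orthonormal ℂ e → Orthonormal ℂ f →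
    ∑ i, ‖⟪e i, T (f i)⟫‖ ≤ C

/-- The trace of an operator computed in the Hilbert basis `b` (for a trace
class operator this is basis independent and is the usual trace). -/
def traceAlong {ι : Type*} (b : HilbertBasis ι ℂ E) (T : E →L[ℂ] E) : ℂ :=
  ∑' i, ⟪b i, T (b i)⟫

/-- The rank one orthogonal projection `p_ξ` onto the span of a unit vector `ξ`. -/
def rankOneProj (ξ : E) : E →L[ℂ] E :=
  (innerSL ℂ ξ).smulRight ξ

/-- An axiomatisation of the Hilbert space tensor product `G = E ⊗ E`:
a bilinear map `tmul` into `G` multiplying inner products and having dense span. -/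
structure HilbertTensorProduct (E G : Type u) [NormedAddCommGroup E]
    [InnerProductSpace ℂ E] [NormedAddCommGroup G] [InnerProductSpace ℂ G] :
    Type u where
  tmul : E →ₗ[ℂ] E →ₗ[ℂ] G
  inner_tmul : ∀ a b c d : E, ⟪tmul a b, tmul c d⟫ = ⟪a, c⟫ * ⟪b, d⟫
  dense_span : Dense (↑(Submodule.span ℂ (Set.range fun z : E × E => tmul z.1 z.2)) : Set G)

/-- The algebraic tensor product `E ⊗_alg E`, viewed as a (dense) subspace of `G`. -/
def HilbertTensorProduct.algSpan (J : HilbertTensorProduct E G) : Submodule ℂ G :=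
  Submodule.span ℂ (Set.range fun z : E × E => J.tmul z.1 z.2)

/-- The Hilbert space tensor product together with the operator tensor product
`(x, y) ↦ x ⊗ y` on bounded operators. -/
structure OperatorTensor (E G : Type u) [NormedAddCommGroup E]
    [InnerProductSpace ℂ E] [NormedAddCommGroup G] [InnerProductSpace ℂ G]
    extends HilbertTensorProduct E G where
  op : (E →L[ℂ] E) → (E →L[ℂ] E) → (G →L[ℂ] G)
  op_tmul : ∀ (x y : E →L[ℂ] E) (a b : E), op x y (tmul a b) = tmul (x a) (y b)

/-- The algebraic tensor product `K(𝔥) • K(𝔥)`: the span in `B(G)` of the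
operators `x ⊗ y` with `x, y` compact. -/
def OperatorTensor.compactSpan (J : OperatorTensor E G) : Submodule ℂ (G →L[ℂ] G) :=
  Submodule.span ℂ {T | ∃ x y : E →L[ℂ] E,
    IsCompactOperator (⇑x) ∧ IsCompactOperator (⇑y) ∧ T = J.op x y}

/-- `β` is the linear functional on `K(𝔥) • K(𝔥)` induced by the bilinear form
`D`, i.e. `β (x ⊗ y) = D (x, y)` for compact `x, y`. -/
def IsBetaFor (J : OperatorTensor E G)
    (D : (E →L[ℂ] E) →ₗ[ℂ] (E →L[ℂ] E) →ₗ[ℂ] ℂ)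
    (β : ↥J.compactSpan →ₗ[ℂ] ℂ) : Prop :=
  ∀ x y : E →L[ℂ] E, IsCompactOperator (⇑x) → IsCompactOperator (⇑y) →
    ∀ hm : J.op x y ∈ J.compactSpan, β ⟨J.op x y, hm⟩ = D x y

/-- `β` is bounded for the operator norm (inherited from `B(G)`). -/
def BetaNormBounded (J : OperatorTensor E G) (β : ↥J.compactSpan →ₗ[ℂ] ℂ) : Prop :=
  ∃ C : ℝ, ∀ S : J.compactSpan, ‖β S‖ ≤ C * ‖(S : G →L[ℂ] G)‖

/-- A decoherence functional is tensor bounded if its associated functional `β`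
on `K(𝔥) • K(𝔥)` is bounded for the (pre-)C*-norm. -/
def IsTensorBounded (J : OperatorTensor E G)
    (d : (E →L[ℂ] E) → (E →L[ℂ] E) → ℂ) : Prop :=
  ∃ D, IsBoundedBilinear D ∧ ExtendsDF D d ∧
    ∃ β, IsBetaFor J D β ∧ BetaNormBounded J β

/-- `β` is uniformly bounded on the projections `p_ξ`, `ξ` a unit vector of the
algebraic tensor product `𝔥 ⊗_alg 𝔥`. -/
def BetaTraciallyBounded (J : OperatorTensor E G) (β : ↥J.compactSpan →ₗ[ℂ] ℂ) : Prop :=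
  ∃ C : ℝ, ∀ ξ : G, ξ ∈ J.toHilbertTensorProduct.algSpan → ‖ξ‖ = 1 →
    ∀ hm : rankOneProj ξ ∈ J.compactSpan, ‖β ⟨rankOneProj ξ, hm⟩‖ ≤ C

/-- A decoherence functional is tracially bounded if it is bounded and its
associated functional `β` is uniformly bounded on rank one projections `p_ξ`
with `ξ` a unit vector in `𝔥 ⊗_alg 𝔥`. -/
def IsTraciallyBounded (J : OperatorTensor E G)
    (d : (E →L[ℂ] E) → (E →L[ℂ] E) → ℂ) : Prop :=
  DFBounded d ∧ ∃ D, IsBoundedBilinear D ∧ ExtendsDF D d ∧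
    ∃ β, IsBetaFor J D β ∧ BetaTraciallyBounded J β

/-!
The representation rests on a noncommutative Grothendieck inequality: for a bounded bilinear form
`φ` on operators and finitely many compact `x j`,
`∑ Re⁺ φ (x j, (x j)*) ≤ 8 ‖φ‖ (‖∑ (x j)* x j‖ + ‖∑ x j (x j)*‖)`.
If `K` bounds `|∑ φ (x j, y j)|` for all families of row and column norm at most one, then replacing
the `x j` and `y j` by random-phase sums, and truncating these sums as `X (1 + t² X* X)⁻¹`, shows
that so does `‖φ‖ / (2 t)² + 2 t K`; iterating at `t = 1 / 4` leaves the bound `8 ‖φ‖`. Some `K`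
exists for compressions of `φ` to finite-dimensional subspaces, which is enough for compact
operators.

A Hahn–Banach argument for cones turns the inequality into a single bounded functional `F` with
`Re⁺ φ (x, x*) ≤ F (x* x, x x*)`. When `φ` is Hermitian, the sesquilinear form `φ (y, x*)` is thus
the difference of two positive forms on the compact operators, and Parseval's identity in the
completion of each one writes it as a sum of `conj (f i x) * f i y`. A bounded functional on compact
operators is `S ↦ tr (S X)` with `X` of trace class, and passing to densities is multiplicative for
tensor products and turns `x ↦ conj (f (x*))` into the adjoint.
-/

section Truncation

variable {H : Type*} [NormedAddCommGroup H] [InnerProductSpace ℂ H] [CompleteSpace H]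

/-- The bounded operator `(1 + Z* Z)⁻¹`. -/
def gramResolvent (Z : H →L[ℂ] H) : H →L[ℂ] H :=
  Ring.inverse (1 + star Z * Z)

theorem isUnit_one_add_star_mul_self (Z : H →L[ℂ] H) : IsUnit (1 + star Z * Z) :=
  (isStrictlyPositive_one.add_nonneg (star_mul_self_nonneg Z)).isUnit

theorem star_gramResolvent (Z : H →L[ℂ] H) : star (gramResolvent Z) = gramResolvent Z := by
  simp [gramResolvent, ← Ring.inverse_star]

theorem one_add_star_mul_self_mul_gramResolvent (Z : H →L[ℂ] H) :
    (1 + star Z * Z) * gramResolvent Z = 1 :=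
  Ring.mul_inverse_cancel _ (isUnit_one_add_star_mul_self Z)

theorem gramResolvent_mul_one_add_star_mul_self (Z : H →L[ℂ] H) :
    gramResolvent Z * (1 + star Z * Z) = 1 :=
  Ring.inverse_mul_cancel _ (isUnit_one_add_star_mul_self Z)

theorem mul_gramResolvent (Z : H →L[ℂ] H) :
    Z * gramResolvent Z = gramResolvent (star Z) * Z := by
  have intertwine : Z * (1 + star Z * Z) = (1 + star (star Z) * star Z) * Z := by
    rw [star_star]; noncomm_ring
  calc Z * gramResolvent Z
      = gramResolvent (star Z) * ((1 + star (star Z) * star Z) * Z) * gramResolvent Z := by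
        rw [← mul_assoc, gramResolvent_mul_one_add_star_mul_self, one_mul]
    _ = gramResolvent (star Z) * Z := by
        rw [← intertwine, mul_assoc, mul_assoc, one_add_star_mul_self_mul_gramResolvent, mul_one]

theorem norm_add_star_mul_self_apply_sq (Z : H →L[ℂ] H) (ξ : H) :
    ‖ξ + star Z (Z ξ)‖ ^ 2 = ‖ξ‖ ^ 2 + 2 * ‖Z ξ‖ ^ 2 + ‖star Z (Z ξ)‖ ^ 2 := by
  have inner_eq : RCLike.re ⟪ξ, star Z (Z ξ)⟫ = ‖Z ξ‖ ^ 2 := by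
    rw [star_eq_adjoint, adjoint_inner_right, inner_self_eq_norm_sq]
  rw [norm_add_sq (𝕜 := ℂ), inner_eq]

theorem norm_gramResolvent_apply_le (Z : H →L[ℂ] H) (ξ : H) : ‖gramResolvent Z ξ‖ ≤ ‖ξ‖ := by
  have h := norm_add_star_mul_self_apply_sq Z (gramResolvent Z ξ)
  rw [show gramResolvent Z ξ + star Z (Z (gramResolvent Z ξ)) = ξ from
    DFunLike.congr_fun (one_add_star_mul_self_mul_gramResolvent Z) ξ] at h
  exact le_of_sq_le_sq (by nlinarith) (norm_nonneg ξ)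

theorem two_mul_norm_apply_gramResolvent_apply_le (Z : H →L[ℂ] H) (ξ : H) :
    2 * ‖Z (gramResolvent Z ξ)‖ ≤ ‖ξ‖ := by
  set ζ := gramResolvent Z ξ
  have h := norm_add_star_mul_self_apply_sq Z ζ
  rw [show ζ + star Z (Z ζ) = ξ from
    DFunLike.congr_fun (one_add_star_mul_self_mul_gramResolvent Z) ξ] at h
  have cauchy_schwarz : ‖Z ζ‖ ^ 2 ≤ ‖ζ‖ * ‖star Z (Z ζ)‖ := by
    rw [← inner_self_eq_norm_sq (𝕜 := ℂ), ← adjoint_inner_right, ← star_eq_adjoint]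
    exact re_inner_le_norm _ _
  exact le_of_sq_le_sq (by nlinarith [sq_nonneg (‖ζ‖ - ‖star Z (Z ζ)‖)]) (norm_nonneg ξ)

/-- A smooth truncation of the singular values of `X` at height `1 / (2 t)`: the operator
`X (1 + t² X* X)⁻¹`. -/
def truncation (t : ℝ) (X : H →L[ℂ] H) : H →L[ℂ] H :=
  X * gramResolvent (t • X)

variable {t : ℝ} (X : H →L[ℂ] H) (ξ : H)

theorem truncation_eq_gramResolvent_mul (ht : t ≠ 0) :
    truncation t X = gramResolvent (t • star X) * X := by
  have h := mul_gramResolvent (t • X)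
  rw [star_smul, star_trivial, smul_mul_assoc, mul_smul_comm] at h
  exact smul_right_injective _ ht h

theorem star_truncation (ht : t ≠ 0) : star (truncation t X) = truncation t (star X) := by
  rw [truncation_eq_gramResolvent_mul X ht, star_mul, star_gramResolvent, truncation]

theorem norm_truncation_apply_le (ht : t ≠ 0) : ‖truncation t X ξ‖ ≤ ‖X ξ‖ := by
  rw [truncation_eq_gramResolvent_mul X ht]
  exact norm_gramResolvent_apply_le _ _

theorem norm_truncation_le (ht : 0 < t) : ‖truncation t X‖ ≤ 1 / (2 * t) := by
  refine opNorm_le_bound _ (by positivity) fun ξ => ?_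
  have h := two_mul_norm_apply_gramResolvent_apply_le (t • X) ξ
  rw [FunLike.coe_smul, Pi.smul_apply, norm_smul, Real.norm_of_nonneg ht.le] at h
  rw [one_div, inv_mul_eq_div, le_div_iff₀ (by positivity), truncation, mul_apply_eq_comp]
  linarith

theorem sub_truncation :
    X - truncation t X = t ^ 2 • (truncation t X * (star X * X)) := by
  have h := congrArg (X * ·) (gramResolvent_mul_one_add_star_mul_self (t • X))
  simp only [star_smul, star_trivial, smul_mul_assoc, mul_smul_comm, smul_smul, mul_add,
    mul_one] at h
  rw [sub_eq_iff_eq_add', truncation, mul_assoc, sq]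
  exact h.symm

theorem norm_sub_truncation_apply_le (ht : 0 < t) :
    ‖(X - truncation t X) ξ‖ ≤ t / 2 * ‖star X (X ξ)‖ := by
  rw [sub_truncation, FunLike.coe_smul, Pi.smul_apply, norm_smul, Real.norm_of_nonneg (sq_nonneg t)]
  calc t ^ 2 * ‖truncation t X (star X (X ξ))‖
      ≤ t ^ 2 * (1 / (2 * t) * ‖star X (X ξ)‖) := by
        gcongr
        exact le_of_opNorm_le _ (norm_truncation_le X ht) _
    _ = t / 2 * ‖star X (X ξ)‖ := by field_simp

end Truncation

section CharacterAverages

open scoped ComplexConjugate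

theorem sum_conj_mul_addChar {Γ : Type*} [AddCommGroup Γ] [Fintype Γ] [DecidableEq (AddChar Γ ℂ)]
    (χ ψ : AddChar Γ ℂ) :
    ∑ γ, conj (χ γ) * ψ γ = if χ = ψ then (Fintype.card Γ : ℂ) else 0 := by
  have h := AddChar.sum_eq_ite (ψ - χ)
  simp only [AddChar.sub_apply, AddChar.map_neg_eq_conj, sub_eq_zero, eq_comm (a := ψ)] at h
  simpa only [mul_comm] using h

variable {Γ α : Type*} [AddCommGroup Γ] [Fintype Γ] [Fintype α] {χ : α → AddChar Γ ℂ}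

theorem sum_sum_sum_conj_mul_addChar (hχ : Function.Injective χ) (c : α → α → ℂ) :
    ∑ γ, ∑ a, ∑ b, conj (χ a γ) * χ b γ * c a b = Fintype.card Γ * ∑ a, c a a := by
  classical
  calc ∑ γ, ∑ a, ∑ b, conj (χ a γ) * χ b γ * c a b
      = ∑ a, ∑ b, (∑ γ, conj (χ a γ) * χ b γ) * c a b := by
        rw [Finset.sum_comm]
        refine Finset.sum_congr rfl fun a _ => ?_
        simp only [Finset.sum_mul, Finset.sum_comm (s := Finset.univ (α := Γ))]
    _ = Fintype.card Γ * ∑ a, c a a := by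
        simp [sum_conj_mul_addChar, hχ.eq_iff, Finset.mul_sum]

theorem sum_norm_sq_sum_addChar_smul {V : Type*} [NormedAddCommGroup V] [InnerProductSpace ℂ V]
    (hχ : Function.Injective χ) (v : α → V) :
    ∑ γ, ‖∑ a, χ a γ • v a‖ ^ 2 = Fintype.card Γ * ∑ a, ‖v a‖ ^ 2 := by
  have h := sum_sum_sum_conj_mul_addChar hχ fun a b => ⟪v a, v b⟫
  have expand (γ : Γ) : ∑ a, ∑ b, conj (χ a γ) * χ b γ * ⟪v a, v b⟫ =
      ⟪∑ a, χ a γ • v a, ∑ a, χ a γ • v a⟫ := by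
    rw [sum_inner]
    simp only [inner_sum, inner_smul_left, inner_smul_right]
    exact Finset.sum_congr rfl fun a _ => Finset.sum_congr rfl fun b _ => by ring
  simp only [expand, inner_self_eq_norm_sq_to_K, Complex.coe_algebraMap] at h
  exact_mod_cast h

theorem sum_apply_sum_addChar_smul {V W : Type*} [AddCommGroup V] [Module ℂ V] [AddCommGroup W]
    [Module ℂ W] (hχ : Function.Injective χ) (φ : V →ₗ[ℂ] W →ₗ[ℂ] ℂ) (x : α → V) (y : α → W) :
    ∑ γ, φ (∑ a, χ a γ • x a) (∑ a, χ a (-γ) • y a) = Fintype.card Γ * ∑ a, φ (x a) (y a) := by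
  rw [← sum_sum_sum_conj_mul_addChar hχ fun a b => φ (x b) (y a)]
  refine Finset.sum_congr rfl fun γ _ => ?_
  simp only [map_sum, map_smul, LinearMap.sum_apply, LinearMap.smul_apply, smul_eq_mul,
    Finset.mul_sum, mul_assoc, AddChar.map_neg_eq_conj]

variable {ι : Type*}

/-- The `j`-th coordinate character of `(ℤ/3)^ι`; these play the role of independent random
phases. The modulus `3` makes the conjugate of a phase differ from the phase itself. -/
def coordChar (j : ι) : AddChar (ι → ZMod 3) ℂ :=
  ZMod.stdAddChar.compAddMonoidHom (Pi.evalAddMonoidHom (fun _ => ZMod 3) j)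

theorem coordChar_single [DecidableEq ι] (i j : ι) :
    coordChar j (Pi.single i 1) = ZMod.stdAddChar (if j = i then (1 : ZMod 3) else 0) :=
  congrArg ZMod.stdAddChar (Pi.single_apply i 1 j)

theorem coordChar_injective : Function.Injective (coordChar (ι := ι)) := fun j k h => by
  classical
  have hj := DFunLike.congr_fun h (Pi.single j 1)
  simp only [coordChar_single] at hj
  by_contra hjk
  simpa [Ne.symm hjk] using ZMod.injective_stdAddChar hj

/-- The differences `coordChar k - coordChar j` for `j ≠ k`, together with the trivial
character. -/
def pairChar : Option {p : ι × ι // p.1 ≠ p.2} → AddChar (ι → ZMod 3) ℂ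
  | none => 0
  | some p => coordChar p.1.2 - coordChar p.1.1

theorem pairChar_some_single [DecidableEq ι] (p : {p : ι × ι // p.1 ≠ p.2}) (i : ι) :
    pairChar (some p) (Pi.single i 1) =
      ZMod.stdAddChar ((if p.1.2 = i then (1 : ZMod 3) else 0) - if p.1.1 = i then 1 else 0) := by
  rw [pairChar, AddChar.sub_apply', coordChar_single, coordChar_single, AddChar.map_sub_eq_div]

theorem pairChar_injective : Function.Injective (pairChar (ι := ι)) := by
  classical
  have at_snd (p : {p : ι × ι // p.1 ≠ p.2}) :
      pairChar (some p) (Pi.single p.1.2 1) = ZMod.stdAddChar (1 : ZMod 3) := by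
    rw [pairChar_some_single, if_pos rfl, if_neg p.2, sub_zero]
  have at_fst (p : {p : ι × ι // p.1 ≠ p.2}) :
      pairChar (some p) (Pi.single p.1.1 1) = ZMod.stdAddChar (-1 : ZMod 3) := by
    rw [pairChar_some_single, if_pos rfl, if_neg p.2.symm, zero_sub]
  have some_ne_none (p : {p : ι × ι // p.1 ≠ p.2}) : pairChar (some p) ≠ pairChar none := by
    intro h
    have := at_snd p
    rw [h, pairChar, AddChar.zero_apply,
      ← AddChar.map_zero_eq_one (ZMod.stdAddChar (N := 3))] at this
    exact zero_ne_one (ZMod.injective_stdAddChar this)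
  rintro (_ | p) (_ | q) h
  · rfl
  · exact (some_ne_none q h.symm).elim
  · exact (some_ne_none p h).elim
  · have snd_eq : q.1.2 = p.1.2 := by
      have := at_snd p
      rw [h, pairChar_some_single] at this
      have := ZMod.injective_stdAddChar this
      by_contra hne
      rw [if_neg hne] at this
      split_ifs at this <;> exact absurd this (by decide)
    have fst_eq : q.1.1 = p.1.1 := by
      have := at_fst p
      rw [h, pairChar_some_single] at this
      have := ZMod.injective_stdAddChar this
      by_contra hne
      rw [if_neg hne] at this
      split_ifs at this <;> exact absurd this (by decide)
    rw [Subtype.ext (Prod.ext fst_eq snd_eq)]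

theorem sum_sum_eq_sum_diag_add_sum_ne {M : Type*} [AddCommMonoid M] [Fintype ι] [DecidableEq ι]
    (f : ι → ι → M) :
    ∑ j, ∑ k, f j k = ∑ j, f j j + ∑ p : {p : ι × ι // p.1 ≠ p.2}, f p.1.1 p.1.2 := by
  rw [← Fintype.sum_prod_type', ← Finset.univ_product_univ, ← Finset.diag_union_offDiag,
    Finset.sum_union (Finset.disjoint_diag_offDiag _), Finset.sum_diag,
    Finset.sum_subtype (Finset.univ.offDiag) (p := fun p : ι × ι => p.1 ≠ p.2) (by simp)]

theorem sum_norm_sq_sum_pair_le {V : Type*} [NormedAddCommGroup V] [InnerProductSpace ℂ V]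
    [Fintype ι] [DecidableEq ι] (v : ι → ι → V) :
    ∑ ω, ‖∑ j, ∑ k, (coordChar j (-ω) * coordChar k ω) • v j k‖ ^ 2 ≤
      Fintype.card (ι → ZMod 3) * (‖∑ j, v j j‖ ^ 2 + ∑ j, ∑ k, ‖v j k‖ ^ 2) := by
  let u : Option {p : ι × ι // p.1 ≠ p.2} → V := fun o => o.elim (∑ j, v j j) fun p =>
    v p.1.1 p.1.2
  have expand (ω : ι → ZMod 3) :
      ∑ j, ∑ k, (coordChar j (-ω) * coordChar k ω) • v j k = ∑ o, pairChar o ω • u o := by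
    rw [sum_sum_eq_sum_diag_add_sum_ne, Fintype.sum_option]
    simp [u, pairChar, AddChar.sub_apply, mul_comm, ← AddChar.map_add_eq_mul]
  simp only [expand]
  rw [sum_norm_sq_sum_addChar_smul pairChar_injective u, Fintype.sum_option]
  gcongr
  · rfl
  rw [sum_sum_eq_sum_diag_add_sum_ne fun j k => ‖v j k‖ ^ 2]
  exact le_add_of_nonneg_left (Finset.sum_nonneg fun _ _ => sq_nonneg _)

end CharacterAverages

section RowColBounds

variable {H : Type*} [NormedAddCommGroup H] [InnerProductSpace ℂ H]
variable {ι κ : Type*} [Fintype ι] [Fintype κ] {x y : ι → H →L[ℂ] H} {c : ℝ}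

/-- The column operator `ξ ↦ (x j ξ)ⱼ` has squared norm at most `c`. -/
def ColumnBounded (x : ι → H →L[ℂ] H) (c : ℝ) : Prop :=
  ∀ ξ, ∑ j, ‖x j ξ‖ ^ 2 ≤ c * ‖ξ‖ ^ 2

namespace ColumnBounded

theorem mono (h : ColumnBounded x c) (hyx : ∀ j ξ, ‖y j ξ‖ ≤ ‖x j ξ‖) :
    ColumnBounded y c := fun ξ =>
  calc ∑ j, ‖y j ξ‖ ^ 2 ≤ ∑ j, ‖x j ξ‖ ^ 2 := by gcongr; exact hyx _ ξ
    _ ≤ c * ‖ξ‖ ^ 2 := h ξ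

theorem smul (h : ColumnBounded x c) (a : ℂ) : ColumnBounded (a • x) (‖a‖ ^ 2 * c) := fun ξ => by
  simp only [Pi.smul_apply, FunLike.coe_smul, norm_smul, mul_pow, ← Finset.mul_sum, mul_assoc]
  gcongr
  exact h ξ

theorem comp_equiv (h : ColumnBounded x c) (e : κ ≃ ι) : ColumnBounded (x ∘ e) c := fun ξ =>
  (e.sum_comp fun j => ‖x j ξ‖ ^ 2).trans_le (h ξ)

theorem norm_apply_sq_le (h : ColumnBounded x c) (j : ι) (ξ : H) :
    ‖x j ξ‖ ^ 2 ≤ c * ‖ξ‖ ^ 2 :=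
  (Finset.single_le_sum (f := fun j => ‖x j ξ‖ ^ 2) (fun _ _ => sq_nonneg _)
    (Finset.mem_univ j)).trans (h ξ)

end ColumnBounded

variable [CompleteSpace H]

theorem columnBounded_iff_norm_sum_le (hc : 0 ≤ c) :
    ColumnBounded x c ↔ ‖∑ j, star (x j) * x j‖ ≤ c := by
  have nonneg : 0 ≤ ∑ j, star (x j) * x j := Finset.sum_nonneg fun j _ => star_mul_self_nonneg _
  have quadratic_form (ξ : H) :
      reApplyInnerSelf (algebraMap ℝ (H →L[ℂ] H) c - ∑ j, star (x j) * x j) ξ =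
        c * ‖ξ‖ ^ 2 - ∑ j, ‖x j ξ‖ ^ 2 := by
    simp [reApplyInnerSelf_apply, Algebra.algebraMap_eq_smul_one, inner_sub_left, sum_apply,
      sum_inner, star_eq_adjoint, adjoint_inner_left, ← Complex.ofReal_pow]
  rw [CStarAlgebra.norm_le_iff_le_algebraMap _ hc nonneg, le_def, isPositive_def',
    and_iff_right ((IsSelfAdjoint.all c).algebraMap _ |>.sub nonneg.isSelfAdjoint)]
  simp only [quadratic_form, sub_nonneg, ColumnBounded]

/-- Both the column operator `(x j)ⱼ` and the row operator, whose adjoint is the column of the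
`star (x j)`, have squared norm at most `c`. -/
structure RowColBounded (x : ι → H →L[ℂ] H) (c : ℝ) : Prop where
  column : ColumnBounded x c
  row : ColumnBounded (star x) c

namespace RowColBounded

protected theorem star (h : RowColBounded x c) : RowColBounded (star x) c :=
  ⟨h.row, by rw [star_star]; exact h.column⟩

theorem smul (h : RowColBounded x c) (a : ℂ) : RowColBounded (a • x) (‖a‖ ^ 2 * c) :=
  ⟨h.column.smul a, by
    simpa only [star_smul, RCLike.star_def, RCLike.norm_conj] using h.row.smul (star a)⟩

theorem comp_equiv (h : RowColBounded x c) (e : κ ≃ ι) : RowColBounded (x ∘ e) c :=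
  ⟨h.column.comp_equiv e, h.row.comp_equiv e⟩

theorem eq_zero (h : RowColBounded x 0) : x = 0 := by
  ext j ξ
  have := h.column.norm_apply_sq_le j ξ
  rw [zero_mul] at this
  simpa using this

end RowColBounded

end RowColBounds

section RandomSums

variable {ι : Type*} [Fintype ι]

/-- The sum of the `x j` weighted by the random phases `coordChar j ω`. -/
def randomSum {V : Type*} [AddCommGroup V] [Module ℂ V] (x : ι → V) (ω : ι → ZMod 3) : V :=
  ∑ j, coordChar j ω • x j

variable [DecidableEq ι]

theorem sum_apply_randomSum {V W : Type*} [AddCommGroup V] [Module ℂ V] [AddCommGroup W]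
    [Module ℂ W] (φ : V →ₗ[ℂ] W →ₗ[ℂ] ℂ) (x : ι → V) (y : ι → W) :
    ∑ ω, φ (randomSum x ω) (randomSum y (-ω)) =
      Fintype.card (ι → ZMod 3) * ∑ j, φ (x j) (y j) :=
  sum_apply_sum_addChar_smul coordChar_injective φ x y

variable {H : Type*} [NormedAddCommGroup H] [InnerProductSpace ℂ H]
variable {x : ι → H →L[ℂ] H} {c t : ℝ}

omit [DecidableEq ι] in
theorem star_randomSum [CompleteSpace H] (x : ι → H →L[ℂ] H) (ω : ι → ZMod 3) :
    star (randomSum x ω) = randomSum (star x) (-ω) := by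
  simp [randomSum, star_sum, star_smul, AddChar.map_neg_eq_conj]

protected theorem ColumnBounded.randomSum (h : ColumnBounded x c) :
    ColumnBounded (randomSum x) (Fintype.card (ι → ZMod 3) * c) := fun ξ => by
  have := sum_norm_sq_sum_addChar_smul coordChar_injective fun j => x j ξ
  simp only [randomSum, sum_apply, FunLike.coe_smul, Pi.smul_apply, this, mul_assoc]
  gcongr
  exact h ξ

variable [CompleteSpace H]

namespace RowColBounded

protected theorem randomSum (h : RowColBounded x c) :
    RowColBounded (randomSum x) (Fintype.card (ι → ZMod 3) * c) := by
  refine ⟨h.column.randomSum, ?_⟩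
  convert h.row.randomSum.comp_equiv (Equiv.neg _)
  exact funext (star_randomSum x)

theorem sum_norm_sq_star_randomSum_randomSum_le (h : RowColBounded x c) (hc : 0 ≤ c) (ξ : H) :
    ∑ ω, ‖star (randomSum x ω) (randomSum x ω ξ)‖ ^ 2 ≤
      Fintype.card (ι → ZMod 3) * (2 * c ^ 2 * ‖ξ‖ ^ 2) := by
  have expand (ω : ι → ZMod 3) : star (randomSum x ω) (randomSum x ω ξ) =
      ∑ j, ∑ k, (coordChar j (-ω) * coordChar k ω) • star (x j) (x k ξ) := by
    rw [star_randomSum, Finset.sum_comm]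
    simp only [randomSum, sum_apply, mul_comm, FunLike.coe_smul, Pi.smul_apply, Pi.star_apply,
      map_sum, map_smul, Finset.smul_sum, smul_smul]
  have diagonal : ‖∑ j, star (x j) (x j ξ)‖ ^ 2 ≤ c ^ 2 * ‖ξ‖ ^ 2 := by
    have := le_of_opNorm_le _ ((columnBounded_iff_norm_sum_le hc).1 h.column) ξ
    rw [sum_apply] at this
    rw [← mul_pow]
    gcongr
    exact this
  have off_diagonal : ∑ j, ∑ k, ‖star (x j) (x k ξ)‖ ^ 2 ≤ c ^ 2 * ‖ξ‖ ^ 2 := by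
    rw [Finset.sum_comm]
    calc ∑ k, ∑ j, ‖star (x j) (x k ξ)‖ ^ 2 ≤ ∑ k, c * ‖x k ξ‖ ^ 2 := by
          gcongr with k
          exact h.row (x k ξ)
      _ ≤ c * (c * ‖ξ‖ ^ 2) := by
          rw [← Finset.mul_sum]
          gcongr
          exact h.column ξ
      _ = c ^ 2 * ‖ξ‖ ^ 2 := by ring
  simp only [expand]
  refine (sum_norm_sq_sum_pair_le _).trans ?_
  gcongr
  linarith

theorem truncation_randomSum (h : RowColBounded x c) (ht : t ≠ 0) :
    RowColBounded (fun ω => truncation t (randomSum x ω)) (Fintype.card (ι → ZMod 3) * c) where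
  column := h.randomSum.column.mono fun _ _ => norm_truncation_apply_le _ _ ht
  row := h.randomSum.row.mono fun ω ξ => by
    rw [Pi.star_apply, star_truncation _ ht]
    exact norm_truncation_apply_le _ _ ht

theorem columnBounded_randomSum_sub_truncation (h : RowColBounded x c) (hc : 0 ≤ c) (ht : 0 < t) :
    ColumnBounded (fun ω => randomSum x ω - truncation t (randomSum x ω))
      ((t * c) ^ 2 * Fintype.card (ι → ZMod 3)) := fun ξ =>
  calc ∑ ω, ‖(randomSum x ω - truncation t (randomSum x ω)) ξ‖ ^ 2
      ≤ ∑ ω, (t / 2 * ‖star (randomSum x ω) (randomSum x ω ξ)‖) ^ 2 := by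
        gcongr
        exact norm_sub_truncation_apply_le _ _ ht
    _ = (t / 2) ^ 2 * ∑ ω, ‖star (randomSum x ω) (randomSum x ω ξ)‖ ^ 2 := by
        simp only [mul_pow, Finset.mul_sum]
    _ ≤ (t / 2) ^ 2 * (Fintype.card (ι → ZMod 3) * (2 * c ^ 2 * ‖ξ‖ ^ 2)) := by
        gcongr
        exact h.sum_norm_sq_star_randomSum_randomSum_le hc ξ
    _ ≤ (t * c) ^ 2 * Fintype.card (ι → ZMod 3) * ‖ξ‖ ^ 2 := by
        have : 0 ≤ (t * c) ^ 2 * Fintype.card (ι → ZMod 3) * ‖ξ‖ ^ 2 := by positivity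
        linarith

theorem randomSum_sub_truncation (h : RowColBounded x c) (hc : 0 ≤ c) (ht : 0 < t) :
    RowColBounded (fun ω => randomSum x ω - truncation t (randomSum x ω))
      ((t * c) ^ 2 * Fintype.card (ι → ZMod 3)) := by
  refine ⟨h.columnBounded_randomSum_sub_truncation hc ht, ?_⟩
  convert (h.star.columnBounded_randomSum_sub_truncation hc ht).comp_equiv (Equiv.neg _) using 1
  funext ω
  simp [star_truncation _ ht.ne', star_randomSum]

end RowColBounded

end RandomSums

section Grothendieck

variable {H : Type*} [NormedAddCommGroup H] [InnerProductSpace ℂ H] [CompleteSpace H]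

/-- The noncommutative Grothendieck inequality with constant `K` for the bilinear form `φ`,
restricted to finite families of operators normalised in row and column. -/
def GrothendieckBound (φ : (H →L[ℂ] H) →L[ℂ] (H →L[ℂ] H) →L[ℂ] ℂ) (K : ℝ) : Prop :=
  ∀ (ι : Type) [Fintype ι] (x y : ι → H →L[ℂ] H), RowColBounded x 1 → RowColBounded y 1 →
    ‖∑ j, φ (x j) (y j)‖ ≤ K

namespace GrothendieckBound

variable {φ : (H →L[ℂ] H) →L[ℂ] (H →L[ℂ] H) →L[ℂ] ℂ} {K : ℝ} {ι : Type} [Fintype ι]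
  {x y : ι → H →L[ℂ] H}

theorem norm_sum_le (h : GrothendieckBound φ K) {a b : ℝ} (ha : 0 ≤ a) (hb : 0 ≤ b)
    (hx : RowColBounded x (a ^ 2)) (hy : RowColBounded y (b ^ 2)) :
    ‖∑ j, φ (x j) (y j)‖ ≤ K * (a * b) := by
  rcases ha.eq_or_lt with rfl | ha
  · simp [(show RowColBounded x 0 by simpa using hx).eq_zero]
  rcases hb.eq_or_lt with rfl | hb
  · simp [(show RowColBounded y 0 by simpa using hy).eq_zero]
  have normalise {z : ι → H →L[ℂ] H} {r : ℝ} (hr : 0 < r) (hz : RowColBounded z (r ^ 2)) :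
      RowColBounded ((r : ℂ)⁻¹ • z) 1 := by
    convert hz.smul (r : ℂ)⁻¹ using 1
    simp [hr.ne']
  have := h ι _ _ (normalise ha hx) (normalise hb hy)
  simp only [Pi.smul_apply, map_smul, FunLike.coe_smul, smul_eq_mul, ← Finset.mul_sum, norm_mul,
    norm_inv, Complex.norm_real, Real.norm_of_nonneg ha.le, Real.norm_of_nonneg hb.le] at this
  rw [← mul_assoc, ← mul_inv, inv_mul_le_iff₀ (by positivity)] at this
  linarith

theorem norm_sum_le_of_truncation (h : GrothendieckBound φ K) {t r : ℝ} (ht : 0 < t) (hr : 0 ≤ r)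
    (hx : RowColBounded (fun j => truncation t (x j)) (r ^ 2))
    (hx' : RowColBounded (fun j => x j - truncation t (x j)) ((t * r) ^ 2))
    (hy : RowColBounded y (r ^ 2))
    (hy' : RowColBounded (fun j => y j - truncation t (y j)) ((t * r) ^ 2)) :
    ‖∑ j, φ (x j) (y j)‖ ≤ Fintype.card ι * (‖φ‖ / (2 * t) ^ 2) + 2 * t * K * r ^ 2 := by
  have split (j : ι) : φ (x j) (y j) = φ (x j - truncation t (x j)) (y j) +
      φ (truncation t (x j)) (y j - truncation t (y j)) +
      φ (truncation t (x j)) (truncation t (y j)) := by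
    simp only [map_sub, sub_apply]
    ring
  have left_remainder := h.norm_sum_le (by positivity) hr hx' hy
  have right_remainder := h.norm_sum_le hr (by positivity) hx hy'
  have truncated : ‖∑ j, φ (truncation t (x j)) (truncation t (y j))‖ ≤
      Fintype.card ι * (‖φ‖ / (2 * t) ^ 2) := by
    have term_le (j : ι) : ‖φ (truncation t (x j)) (truncation t (y j))‖ ≤ ‖φ‖ / (2 * t) ^ 2 :=
      calc _ ≤ ‖φ‖ * (1 / (2 * t)) * (1 / (2 * t)) :=
            φ.le_of_opNorm₂_le_of_le le_rfl (norm_truncation_le _ ht) (norm_truncation_le _ ht)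
        _ = ‖φ‖ / (2 * t) ^ 2 := by ring
    calc _ ≤ ∑ _j : ι, ‖φ‖ / (2 * t) ^ 2 := norm_sum_le_of_le _ fun j _ => term_le j
      _ = _ := by rw [Finset.sum_const, nsmul_eq_mul, Finset.card_univ]
  simp only [split, Finset.sum_add_distrib]
  calc _ ≤ K * (t * r * r) + K * (r * (t * r)) + Fintype.card ι * (‖φ‖ / (2 * t) ^ 2) :=
        norm_add₃_le.trans (add_le_add (add_le_add left_remainder right_remainder) truncated)
    _ = _ := by ring

-- Averaging over random sums makes the truncated parts uniformly bounded, while the remainders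
-- are small in the row and column norms.
theorem improve (h : GrothendieckBound φ K) {t : ℝ} (ht : 0 < t) :
    GrothendieckBound φ (‖φ‖ / (2 * t) ^ 2 + 2 * t * K) := by
  classical
  intro ι _ x y hx hy
  have N_pos : (0 : ℝ) < Fintype.card (ι → ZMod 3) := Nat.cast_pos.2 Fintype.card_pos
  have average := congrArg norm (sum_apply_randomSum φ.toLinearMap₁₂ x y)
  have hx_trunc := hx.truncation_randomSum ht.ne'
  have hx_rem := hx.randomSum_sub_truncation zero_le_one ht
  have hy_sum := hy.randomSum.comp_equiv (Equiv.neg _)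
  have hy_rem := (hy.randomSum_sub_truncation zero_le_one ht).comp_equiv (Equiv.neg _)
  simp only [toLinearMap₁₂_apply_apply_apply, norm_mul, Complex.norm_natCast, mul_one] at *
  have sq_sqrt := Real.sq_sqrt N_pos.le
  have main := h.norm_sum_le_of_truncation (r := √(Fintype.card (ι → ZMod 3)))
    (y := fun ω => randomSum y (-ω)) ht (Real.sqrt_nonneg _) (by rwa [sq_sqrt])
    (by rwa [mul_pow, sq_sqrt]) (by rwa [sq_sqrt]) (by rwa [mul_pow, sq_sqrt])
  rw [average, sq_sqrt] at main
  refine le_of_mul_le_mul_left ?_ N_pos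
  linarith

theorem eight_mul_norm (h : GrothendieckBound φ K) : GrothendieckBound φ (8 * ‖φ‖) := by
  have iterate (n : ℕ) : GrothendieckBound φ (8 * ‖φ‖ + (1 / 2) ^ n * (K - 8 * ‖φ‖)) := by
    induction n with
    | zero => simpa using h
    | succ n ih =>
      convert ih.improve (t := 1 / 4) (by norm_num) using 1
      ring
  intro ι _ x y hx hy
  have limit : Filter.Tendsto (fun n : ℕ => 8 * ‖φ‖ + (1 / 2 : ℝ) ^ n * (K - 8 * ‖φ‖))
      Filter.atTop (nhds (8 * ‖φ‖ + 0 * (K - 8 * ‖φ‖))) :=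
    ((tendsto_pow_atTop_nhds_zero_of_lt_one (by norm_num) (by norm_num)).mul_const _).const_add _
  rw [zero_mul, add_zero] at limit
  exact ge_of_tendsto' limit fun n => iterate n ι x y hx hy

end GrothendieckBound

end Grothendieck

section CompactOperators

open Filter InnerProductSpace

theorem tendsto_comp_of_isCompactOperator {V W α : Type*} [NormedAddCommGroup V] [NormedSpace ℂ V]
    [NormedAddCommGroup W] [NormedSpace ℂ W] {l : Filter α} {P : α → W →L[ℂ] W} {Q : W →L[ℂ] W}
    {C : NNReal} (hP : ∀ a, ‖P a‖₊ ≤ C) (hPQ : ∀ w, Tendsto (fun a => P a w) l (nhds (Q w)))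
    {S : V →L[ℂ] W} (hS : IsCompactOperator S) :
    Tendsto (fun a => P a ∘L S) l (nhds (Q ∘L S)) := by
  obtain ⟨K, hK, hSK⟩ := hS.image_closedBall_subset_compact (𝕜₁ := ℂ) 1
  have lipschitz (a) : LipschitzWith C (P a) := (P a).lipschitz.weaken (hP a)
  have uniform : TendstoUniformlyOn (fun a w => P a w) Q l K := by
    have equicontinuous : EquicontinuousOn (fun a w => P a w) K :=
      (LipschitzWith.uniformEquicontinuous _ C lipschitz).equicontinuous.equicontinuousOn K
    have := (EquicontinuousOn.tendsto_uniformOnFun_iff_pi' (𝔖 := {K}) (by simpa using hK)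
      (by simpa using equicontinuous) l Q).2
        (tendsto_pi_nhds.2 fun w => hPQ w)
    exact UniformOnFun.tendsto_iff_tendstoUniformlyOn.1 this K rfl
  refine Metric.tendsto_nhds.2 fun ε hε => ?_
  filter_upwards [Metric.tendstoUniformlyOn_iff.1 uniform (ε / 2) (half_pos hε)] with a ha
  rw [dist_comm, dist_eq_norm]
  refine (opNorm_le_of_unit_norm (half_pos hε).le fun ξ hξ => ?_).trans_lt (half_lt_self hε)
  simpa [dist_eq_norm] using (ha (S ξ) (hSK ⟨ξ, by simp [hξ], rfl⟩)).le

variable {H : Type*} [NormedAddCommGroup H] [InnerProductSpace ℂ H]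

theorem isCompactOperator_rankOne (u v : H) : IsCompactOperator (rankOne ℂ u v : H →L[ℂ] H) :=
  (isCompactOperator_id.clm_comp (toSpanSingleton ℂ u)).comp_clm (innerSL ℂ v)

theorem norm_sum_smul_rankOne_le {ι : Type*} {e f : ι → H} (he : Orthonormal ℂ e)
    (hf : Orthonormal ℂ f) {c : ι → ℂ} (hc : ∀ i, ‖c i‖ ≤ 1) (s : Finset ι) :
    ‖∑ i ∈ s, c i • rankOne ℂ (f i) (e i)‖ ≤ 1 := by
  refine opNorm_le_bound _ zero_le_one fun ξ => ?_
  rw [one_mul, ← sq_le_sq₀ (norm_nonneg _) (norm_nonneg _)]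
  calc ‖(∑ i ∈ s, c i • rankOne ℂ (f i) (e i)) ξ‖ ^ 2
      = ∑ i ∈ s, (‖c i‖ * ‖⟪e i, ξ⟫‖) ^ 2 := by
        have := hf.inner_sum (fun i => c i * ⟪e i, ξ⟫) (fun i => c i * ⟪e i, ξ⟫) s
        rw [inner_self_eq_norm_sq_to_K] at this
        simp only [RCLike.conj_mul, norm_mul] at this
        simp only [sum_apply, smul_apply, rankOne_apply, smul_smul]
        exact_mod_cast this
    _ ≤ ∑ i ∈ s, ‖⟪e i, ξ⟫‖ ^ 2 := by
        gcongr with i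
        exact mul_le_of_le_one_left (norm_nonneg _) (hc i)
    _ ≤ ‖ξ‖ ^ 2 := he.sum_inner_products_le ξ

variable {ι : Type*} (b : HilbertBasis ι ℂ H) (s : Finset ι)

/-- The orthogonal projection onto the span of the basis vectors `b i`, `i ∈ s`. -/
def basisProj : H →L[ℂ] H :=
  ∑ i ∈ s, rankOne ℂ (b i) (b i)

theorem norm_basisProj_le : ‖basisProj b s‖ ≤ 1 := by
  simpa [basisProj] using
    norm_sum_smul_rankOne_le b.orthonormal b.orthonormal (c := 1) (by simp) s

theorem tendsto_basisProj_apply (ξ : H) :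
    Tendsto (fun s => basisProj b s ξ) atTop (nhds ξ) := by
  have := b.hasSum_repr ξ
  simp only [b.repr_apply_apply] at this
  simp only [basisProj, sum_apply, rankOne_apply]
  exact this

theorem tendsto_basisProj_mul {x : H →L[ℂ] H} (hx : IsCompactOperator x) :
    Tendsto (fun s => basisProj b s * x) atTop (nhds x) :=
  tendsto_comp_of_isCompactOperator (Q := .id ℂ H) (C := 1) (norm_basisProj_le b)
    (tendsto_basisProj_apply b) hx

theorem rankOne_polarization (u v : H) :
    (4 : ℂ) • rankOne ℂ u v = rankOne ℂ (u + v) (u + v) - rankOne ℂ (u - v) (u - v) +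
      Complex.I • rankOne ℂ (u + Complex.I • v) (u + Complex.I • v) -
      Complex.I • rankOne ℂ (u - Complex.I • v) (u - Complex.I • v) := by
  simp only [map_add, map_sub, map_smulₛₗ, add_apply, sub_apply, smul_apply, Complex.conj_I,
    RingHom.id_apply, smul_add, smul_sub, smul_smul, neg_smul,
    Complex.I_mul_I]
  match_scalars
  · linear_combination 2 * Complex.I_mul_I
  all_goals ring

variable [CompleteSpace H]

theorem star_basisProj : star (basisProj b s) = basisProj b s := by
  simp [basisProj, star_sum, star_eq_adjoint]

theorem basisProj_mul (x : H →L[ℂ] H) :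
    basisProj b s * x = ∑ i ∈ s, rankOne ℂ (b i) (star x (b i)) := by
  simp only [basisProj, Finset.sum_mul, mul_def, rankOne_comp, star_eq_adjoint]

theorem compactOperator_le_of_isClosed {W : Submodule ℂ (H →L[ℂ] H)}
    (hW : IsClosed (W : Set (H →L[ℂ] H))) (hproj : ∀ w : H, ‖w‖ = 1 → rankOne ℂ w w ∈ W) :
    compactOperator (.id ℂ) H H ≤ W := fun x hx => by
  have diagonal_mem (w : H) : rankOne ℂ w w ∈ W := by
    rcases eq_or_ne w 0 with rfl | hw
    · simp
    obtain ⟨r, v, hv, rfl⟩ : ∃ (r : ℂ) (v : H), ‖v‖ = 1 ∧ w = r • v :=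
      ⟨‖w‖, _, norm_smul_inv_norm hw,
        (smul_inv_smul₀ (Complex.ofReal_ne_zero.2 (norm_ne_zero_iff.2 hw)) w).symm⟩
    simpa only [map_smulₛₗ, smul_apply] using W.smul_mem _ (W.smul_mem _ (hproj v hv))
  have rankOne_mem (u v : H) : rankOne ℂ u v ∈ W := by
    rw [← W.smul_mem_iff (four_ne_zero : (4 : ℂ) ≠ 0), rankOne_polarization]
    exact W.sub_mem (W.add_mem (W.sub_mem (diagonal_mem _) (diagonal_mem _))
      (W.smul_mem _ (diagonal_mem _))) (W.smul_mem _ (diagonal_mem _))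
  obtain ⟨_, b, -⟩ := exists_hilbertBasis ℂ H
  refine hW.mem_of_tendsto (tendsto_basisProj_mul b hx) (.of_forall fun s => ?_)
  rw [basisProj_mul]
  exact W.sum_mem fun i _ => rankOne_mem _ _

theorem isCompactOperator_star {x : H →L[ℂ] H} (hx : IsCompactOperator x) :
    IsCompactOperator (star x : H →L[ℂ] H) := by
  refine compactOperator_le_of_isClosed (W := (compactOperator (.id ℂ) H H).comap
    (starL ℂ : (H →L[ℂ] H) ≃L⋆[ℂ] (H →L[ℂ] H)).toLinearEquiv.toLinearMap)
    (isClosed_setOfPred_isCompactOperator.preimage continuous_star) (fun w _ => ?_) hx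
  rw [Submodule.mem_comap]
  simpa [star_eq_adjoint] using! isCompactOperator_rankOne w w

theorem tendsto_basisProj_mul_mul {x : H →L[ℂ] H} (hx : IsCompactOperator x) :
    Tendsto (fun s => basisProj b s * x * basisProj b s) atTop (nhds x) := by
  have left := tendsto_iff_norm_sub_tendsto_zero.1 (tendsto_basisProj_mul b hx)
  have right := (tendsto_basisProj_mul b (isCompactOperator_star hx)).star
  simp only [star_mul, star_star, star_basisProj] at right
  replace right := tendsto_iff_norm_sub_tendsto_zero.1 right
  refine tendsto_iff_norm_sub_tendsto_zero.2
    (squeeze_zero (fun _ => norm_nonneg _) (fun s => ?_) (by simpa using left.add right))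
  calc ‖basisProj b s * x * basisProj b s - x‖
      = ‖(basisProj b s * x - x) * basisProj b s + (x * basisProj b s - x)‖ := by
        rw [sub_mul, sub_add_sub_cancel]
    _ ≤ ‖basisProj b s * x - x‖ * ‖basisProj b s‖ + ‖x * basisProj b s - x‖ :=
        (norm_add_le _ _).trans (add_le_add_left (norm_mul_le _ _) _)
    _ ≤ ‖basisProj b s * x - x‖ + ‖x * basisProj b s - x‖ := by
        gcongr
        exact mul_le_of_le_one_right (norm_nonneg _) (norm_basisProj_le b s)

end CompactOperators

section CompactFamilies

variable {H : Type*} [NormedAddCommGroup H] [InnerProductSpace ℂ H] [CompleteSpace H]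

/-- The bilinear form `(x, y) ↦ φ (P x P) (P y P)`. -/
def compression (φ : (H →L[ℂ] H) →L[ℂ] (H →L[ℂ] H) →L[ℂ] ℂ) (P : H →L[ℂ] H) :
    (H →L[ℂ] H) →L[ℂ] (H →L[ℂ] H) →L[ℂ] ℂ :=
  φ.bilinearComp (mulLeftRight ℂ _ P P) (mulLeftRight ℂ _ P P)

variable (φ : (H →L[ℂ] H) →L[ℂ] (H →L[ℂ] H) →L[ℂ] ℂ)

theorem norm_mul_mul_le_norm {P : H →L[ℂ] H} (hP : ‖P‖ ≤ 1) (x : H →L[ℂ] H) :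
    ‖P * x * P‖ ≤ ‖x‖ :=
  (norm_mul_le_of_le (norm_mul_le_of_le hP le_rfl) hP).trans_eq (by ring)

theorem norm_compression_le {P : H →L[ℂ] H} (hP : ‖P‖ ≤ 1) : ‖compression φ P‖ ≤ ‖φ‖ :=
  opNorm_le_bound₂ _ φ.opNorm_nonneg fun x y =>
    φ.le_of_opNorm₂_le_of_le le_rfl (norm_mul_mul_le_norm hP x) (norm_mul_mul_le_norm hP y)

variable {κ : Type*} (b : HilbertBasis κ ℂ H) (s : Finset κ)

omit [CompleteSpace H] in
theorem norm_mul_basisProj_le (x : H →L[ℂ] H) : ‖x * basisProj b s‖ ≤ ∑ i ∈ s, ‖x (b i)‖ := by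
  simp only [basisProj, Finset.mul_sum, mul_def, InnerProductSpace.comp_rankOne]
  exact norm_sum_le_of_le _ fun i _ => by simp [b.orthonormal.1 i]

omit [CompleteSpace H] in
theorem ColumnBounded.sum_norm_mul_basisProj_sq_le {ι : Type*} [Fintype ι] {x : ι → H →L[ℂ] H}
    {c : ℝ} (h : ColumnBounded x c) :
    ∑ j, ‖x j * basisProj b s‖ ^ 2 ≤ s.card ^ 2 * c :=
  calc ∑ j, ‖x j * basisProj b s‖ ^ 2
      ≤ ∑ j, s.card * ∑ i ∈ s, ‖x j (b i)‖ ^ 2 := by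
        gcongr with j
        exact (pow_le_pow_left₀ (norm_nonneg _) (norm_mul_basisProj_le b s (x j)) 2).trans
          (sq_sum_le_card_mul_sum_sq)
    _ = s.card * ∑ i ∈ s, ∑ j, ‖x j (b i)‖ ^ 2 := by rw [← Finset.mul_sum, Finset.sum_comm]
    _ ≤ s.card * ∑ _i ∈ s, c := by
        gcongr with i
        simpa [b.orthonormal.1 i] using h (b i)
    _ = s.card ^ 2 * c := by rw [Finset.sum_const, nsmul_eq_mul]; ring

theorem grothendieckBound_compression_basisProj :
    GrothendieckBound (compression φ (basisProj b s)) (‖φ‖ * s.card ^ 2) := by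
  intro ι _ x y hx hy
  have hx_sum := hx.column.sum_norm_mul_basisProj_sq_le b s
  have hy_sum := hy.column.sum_norm_mul_basisProj_sq_le b s
  have compressed_le (z : H →L[ℂ] H) :
      ‖basisProj b s * z * basisProj b s‖ ≤ ‖z * basisProj b s‖ := by
    rw [mul_assoc]
    exact (norm_mul_le_of_le (norm_basisProj_le b s) le_rfl).trans_eq (one_mul _)
  calc ‖∑ j, compression φ (basisProj b s) (x j) (y j)‖
      ≤ ∑ j, ‖φ‖ * ((‖x j * basisProj b s‖ ^ 2 + ‖y j * basisProj b s‖ ^ 2) / 2) := by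
        refine norm_sum_le_of_le _ fun j _ => (φ.le_of_opNorm₂_le_of_le le_rfl
          (compressed_le (x j)) (compressed_le (y j))).trans ?_
        rw [mul_assoc]
        gcongr
        linarith [two_mul_le_add_sq ‖x j * basisProj b s‖ ‖y j * basisProj b s‖]
    _ = ‖φ‖ * ((∑ j, ‖x j * basisProj b s‖ ^ 2 + ∑ j, ‖y j * basisProj b s‖ ^ 2) / 2) := by
        rw [← Finset.mul_sum, ← Finset.sum_div, Finset.sum_add_distrib]
    _ ≤ ‖φ‖ * s.card ^ 2 := by
        gcongr
        linarith

variable {ι : Type} [Fintype ι] {x y : ι → H →L[ℂ] H}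

-- Letting the compressions tend to `φ`, only the a priori norms depend on the projection.
theorem norm_sum_le_of_rowColBounded_of_isCompactOperator (hx : ∀ j, IsCompactOperator (x j))
    (hy : ∀ j, IsCompactOperator (y j)) {r t : ℝ} (hr : 0 ≤ r) (ht : 0 ≤ t)
    (hxr : RowColBounded x (r ^ 2)) (hyt : RowColBounded y (t ^ 2)) :
    ‖∑ j, φ (x j) (y j)‖ ≤ 8 * ‖φ‖ * (r * t) := by
  obtain ⟨_, b, -⟩ := exists_hilbertBasis ℂ H
  have limit : Filter.Tendsto (fun s => ‖∑ j, compression φ (basisProj b s) (x j) (y j)‖)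
      Filter.atTop (nhds ‖∑ j, φ (x j) (y j)‖) :=
    (tendsto_finsetSum _ fun j _ => (φ.continuous₂.tendsto (x j, y j)).comp
      ((tendsto_basisProj_mul_mul b (hx j)).prodMk_nhds (tendsto_basisProj_mul_mul b (hy j)))).norm
  refine le_of_tendsto' limit fun s =>
    ((grothendieckBound_compression_basisProj φ b s).eight_mul_norm.norm_sum_le hr ht
      hxr hyt).trans ?_
  gcongr
  exact norm_compression_le φ (norm_basisProj_le b s)

omit [CompleteSpace H] in
theorem ColumnBounded.ite {c : ℝ} (h : ColumnBounded x c) (p : ι → Prop) [DecidablePred p] :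
    ColumnBounded (fun j => if p j then x j else 0) c :=
  h.mono fun j ξ => by split_ifs <;> simp

theorem rowColBounded_norm_add_norm (x : ι → H →L[ℂ] H) :
    RowColBounded x (‖∑ j, star (x j) * x j‖ + ‖∑ j, x j * star (x j)‖) where
  column := (columnBounded_iff_norm_sum_le (by positivity)).2 (by simp)
  row := (columnBounded_iff_norm_sum_le (by positivity)).2 (by simp)

theorem sum_max_re_le_of_isCompactOperator (hx : ∀ j, IsCompactOperator (x j)) :
    ∑ j, max (φ (x j) (star (x j))).re 0 ≤
      8 * ‖φ‖ * (‖∑ j, star (x j) * x j‖ + ‖∑ j, x j * star (x j)‖) := by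
  classical
  set c := ‖∑ j, star (x j) * x j‖ + ‖∑ j, x j * star (x j)‖
  have c_nonneg : 0 ≤ c := by positivity
  let z (j : ι) : H →L[ℂ] H := if 0 ≤ (φ (x j) (star (x j))).re then x j else 0
  have z_compact (j : ι) : IsCompactOperator (z j) := by
    by_cases h : 0 ≤ (φ (x j) (star (x j))).re
    · simpa [z, h] using hx j
    · simpa [z, h] using isCompactOperator_zero
  have z_bounded : RowColBounded z (√c ^ 2) := by
    rw [Real.sq_sqrt c_nonneg]
    have h := rowColBounded_norm_add_norm x
    refine ⟨h.column.ite _, ?_⟩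
    convert h.row.ite fun j => 0 ≤ (φ (x j) (star (x j))).re using 1
    funext j
    simp [z, apply_ite star]
  have re_eq (j : ι) : max (φ (x j) (star (x j))).re 0 = (φ (z j) (star (z j))).re := by
    by_cases h : 0 ≤ (φ (x j) (star (x j))).re
    · simp [z, h]
    · simp [z, h, (not_le.1 h).le]
  calc ∑ j, max (φ (x j) (star (x j))).re 0 = (∑ j, φ (z j) (star (z j))).re := by
        simp only [re_eq, Complex.re_sum]
    _ ≤ ‖∑ j, φ (z j) (star (z j))‖ := Complex.re_le_norm _
    _ ≤ 8 * ‖φ‖ * (√c * √c) :=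
        norm_sum_le_of_rowColBounded_of_isCompactOperator φ z_compact
          (fun j => isCompactOperator_star (z_compact j)) (Real.sqrt_nonneg c) (Real.sqrt_nonneg c)
          z_bounded z_bounded.star
    _ = 8 * ‖φ‖ * c := by rw [Real.mul_self_sqrt c_nonneg]

end CompactFamilies

section MazurOrlicz

variable {V : Type*} [SeminormedAddCommGroup V] [NormedSpace ℝ V]

/-- The epigraph of `M * ‖·‖`, as a pointed cone. -/
def normEpigraph (V : Type*) [SeminormedAddCommGroup V] [NormedSpace ℝ V] {M : ℝ} (hM : 0 ≤ M) :
    PointedCone ℝ (V × ℝ) where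
  carrier := {p | M * ‖p.1‖ ≤ p.2}
  zero_mem' := by simp
  add_mem' {p q} hp hq := calc
    M * ‖p.1 + q.1‖ ≤ M * (‖p.1‖ + ‖q.1‖) := by gcongr; exact norm_add_le _ _
    _ ≤ p.2 + q.2 := by rw [mul_add]; exact add_le_add hp hq
  smul_mem' c p hp := by
    change M * ‖(c : ℝ) • p.1‖ ≤ c * p.2
    rw [norm_smul_of_nonneg c.2, mul_left_comm]
    exact mul_le_mul_of_nonneg_left hp c.2

theorem mem_normEpigraph {M : ℝ} {hM : 0 ≤ M} {v : V} {t : ℝ} :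
    (v, t) ∈ normEpigraph V hM ↔ M * ‖v‖ ≤ t :=
  .rfl

-- The Riesz extension theorem produces a functional on `V × ℝ` whose restriction to `V` is `-f`.
theorem exists_norm_le_and_le_of_pointedCone {M : ℝ} (hM : 0 ≤ M) (P : PointedCone ℝ (V × ℝ))
    (hP : ∀ p ∈ P, p.2 ≤ M * ‖p.1‖) :
    ∃ f : StrongDual ℝ V, ‖f‖ ≤ M ∧ ∀ p ∈ P, p.2 ≤ f p.1 := by
  let negP : PointedCone ℝ (V × ℝ) := P.map (-LinearMap.id)
  have neg_mem {p} (hp : p ∈ P) : -p ∈ negP := PointedCone.mem_map.2 ⟨p, hp, rfl⟩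
  obtain ⟨g, hg, g_nonneg⟩ := riesz_extension (normEpigraph V hM ⊔ negP)
    ((LinearMap.snd ℝ V ℝ).toPMap (Submodule.prod ⊥ ⊤))
    (by
      rintro ⟨⟨v, t⟩, hv⟩ h
      obtain rfl : v = 0 := by simpa using hv
      obtain ⟨⟨w, s⟩, he, _, hq, h_add⟩ := Submodule.mem_sup.1 h
      obtain ⟨p, hp, rfl⟩ := PointedCone.mem_map.1 hq
      obtain ⟨rfl, rfl⟩ : w = p.1 ∧ s = t + p.2 := by
        simpa [Prod.ext_iff, add_neg_eq_iff_eq_add] using h_add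
      have := (hP p hp).trans (mem_normEpigraph.1 he)
      simpa using this)
    (fun ⟨v, t⟩ => ⟨⟨(0, M * ‖v‖ - t), by simp⟩,
      Submodule.mem_sup_left (by simp [mem_normEpigraph])⟩)
  have g_snd (t : ℝ) : g (0, t) = t := by simpa using hg ⟨(0, t), by simp⟩
  have g_apply (v : V) (t : ℝ) : g (v, t) = t + g (v, 0) := by
    nth_rw 2 [← g_snd t]
    simp [← map_add]
  let f : V →ₗ[ℝ] ℝ := -g ∘ₗ LinearMap.inl ℝ V ℝ
  have f_le (v : V) : f v ≤ M * ‖v‖ := by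
    have := g_nonneg _ (Submodule.mem_sup_left (mem_normEpigraph.2 (le_refl (M * ‖v‖))))
    rw [g_apply] at this
    exact neg_le_iff_add_nonneg.2 this
  have le_f {p} (hp : p ∈ P) : p.2 ≤ f p.1 := by
    have := g_nonneg _ (Submodule.mem_sup_right (neg_mem hp))
    rw [map_neg, ← Prod.mk.eta (p := p), g_apply, neg_nonneg, ← le_neg_iff_add_nonpos_right] at this
    exact this
  have f_bound (v : V) : ‖f v‖ ≤ M * ‖v‖ :=
    abs_le'.2 ⟨f_le v, by simpa using f_le (-v)⟩
  exact ⟨f.mkContinuous M f_bound, f.mkContinuous_norm_le hM f_bound, fun p hp => le_f hp⟩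

end MazurOrlicz

section HermitianForms

open InnerProductSpace

variable {W : Type*} [SeminormedAddCommGroup W] [StarAddMonoid W] [NormedStarGroup W]
  [NormedSpace ℂ W] [StarModule ℂ W]

/-- The functional `x ↦ conj (f (star x))`. -/
def conjFunctional (f : StrongDual ℂ W) : StrongDual ℂ W :=
  (star (WithConv.toConv f)).ofConv

theorem conjFunctional_apply (f : StrongDual ℂ W) (x : W) :
    conjFunctional f x = starRingEnd ℂ (f (star x)) :=
  rfl

theorem exists_conjFunctional_eq_and_re_eq (f : StrongDual ℝ W) :
    ∃ g : StrongDual ℂ W, conjFunctional g = g ∧ ∀ x : W, star x = x → (g x).re = f x := by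
  let h : StrongDual ℂ W := StrongDual.extendRCLike f
  have h_re (x : W) : (h x).re = f x := StrongDual.re_extendRCLike_apply (𝕜 := ℂ) f x
  refine ⟨(1 / 2 : ℂ) • (h + conjFunctional h), ?_, fun x hx => ?_⟩
  · ext x
    simp [conjFunctional_apply, map_ofNat, add_comm]
  · simp [conjFunctional_apply, hx, h_re, ← two_mul]

variable {H : Type*} [NormedAddCommGroup H] [InnerProductSpace ℂ H] [CompleteSpace H]

theorem eq_of_forall_rankOne_self {f g : StrongDual ℂ (H →L[ℂ] H)}
    (hfg : ∀ w : H, ‖w‖ = 1 → f (rankOne ℂ w w) = g (rankOne ℂ w w)) {x : H →L[ℂ] H}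
    (hx : IsCompactOperator x) : f x = g x :=
  compactOperator_le_of_isClosed (W := (f - g).ker) (f - g).isClosed_ker
    (fun w hw => by simpa [sub_eq_zero] using hfg w hw) hx |> sub_eq_zero.1

variable (φ : (H →L[ℂ] H) →L[ℂ] (H →L[ℂ] H) →L[ℂ] ℂ)

theorem apply_eq_conj_apply_star
    (hφ : ∀ p q : H →L[ℂ] H, IsStarProjection p → IsStarProjection q →
      φ p q = starRingEnd ℂ (φ q p))
    {x y : H →L[ℂ] H} (hx : IsCompactOperator x) (hy : IsCompactOperator y) :
    φ x y = starRingEnd ℂ (φ (star y) (star x)) := by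
  have proj {w : H} (hw : ‖w‖ = 1) : IsStarProjection (rankOne ℂ w w : H →L[ℂ] H) :=
    isStarProjection_rankOne_self hw
  have right_proj {q : H →L[ℂ] H} (hq : IsStarProjection q) :
      φ x q = starRingEnd ℂ (φ q (star x)) :=
    eq_of_forall_rankOne_self (f := φ.flip q) (g := conjFunctional (φ q)) (fun w hw => by
      rw [flip_apply, conjFunctional_apply, (proj hw).isSelfAdjoint.star_eq, hφ _ _ (proj hw) hq])
      hx
  exact eq_of_forall_rankOne_self (f := φ x) (g := conjFunctional (φ.flip (star x)))
    (fun w hw => by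
      rw [right_proj (proj hw), conjFunctional_apply, flip_apply, (proj hw).isSelfAdjoint.star_eq])
    hy

theorem sum_max_re_smul_le {n : ℕ} (t : Fin n → NNReal) {x : Fin n → H →L[ℂ] H}
    (hx : ∀ j, IsCompactOperator (x j)) :
    ∑ j, t j * max (φ (x j) (star (x j))).re 0 ≤
      8 * ‖φ‖ * (‖∑ j, t j • (star (x j) * x j)‖ + ‖∑ j, t j • (x j * star (x j))‖) := by
  have sqrt_mul (j) : (Real.sqrt (t j) : ℂ) * Real.sqrt (t j) = (t j : ℝ) := by
    rw [← Complex.ofReal_mul, Real.mul_self_sqrt (t j).coe_nonneg]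
  convert sum_max_re_le_of_isCompactOperator φ (x := fun j => (Real.sqrt (t j) : ℂ) • x j)
    (fun j => (hx j).smul _) using 4 with j _ j _ j
  · rw [star_smul, map_smul, map_smul, smul_apply, smul_smul]
    simp [sqrt_mul, mul_max_of_nonneg]
  · simp [smul_smul, NNReal.smul_def]
  · simp [smul_smul, NNReal.smul_def]

theorem exists_re_le_strongDual_real :
    ∃ f : StrongDual ℝ ((H →L[ℂ] H) × (H →L[ℂ] H)), ∀ x : H →L[ℂ] H, IsCompactOperator x →
      max (φ x (star x)).re 0 ≤ f (star x * x, x * star x) := by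
  let sample (x : {x : H →L[ℂ] H // IsCompactOperator x}) : ((H →L[ℂ] H) × (H →L[ℂ] H)) × ℝ :=
    ((star x.1 * x.1, x.1 * star x.1), max (φ x.1 (star x.1)).re 0)
  obtain ⟨f, -, hf⟩ := exists_norm_le_and_le_of_pointedCone (M := 16 * ‖φ‖)
    (mul_nonneg (by norm_num) φ.opNorm_nonneg) (Submodule.span NNReal (Set.range sample))
    (fun p hp => by
      obtain ⟨n, t, q, rfl⟩ := Submodule.mem_span_set'.1 hp
      choose x hx using fun j => (q j).2
      obtain ⟨⟨left, right⟩, value⟩ :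
          ((∑ j, t j • (star (x j).1 * (x j).1) = (∑ j, t j • (q j).1).1.1) ∧
            (∑ j, t j • ((x j).1 * star (x j).1) = (∑ j, t j • (q j).1).1.2)) ∧
          ∑ j, t j * max (φ (x j).1 (star (x j).1)).re 0 = (∑ j, t j • (q j).1).2 := by
        simp only [← hx, sample, Prod.fst_sum, Prod.snd_sum, Prod.smul_fst, Prod.smul_snd,
          NNReal.smul_def, smul_eq_mul, and_self]
      have bound := sum_max_re_smul_le φ t (x := fun j => (x j).1) fun j => (x j).2
      rw [left, right, value] at bound
      have double (a : ℝ) : 8 * ‖φ‖ * (a + a) = 16 * ‖φ‖ * a := by ring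
      exact bound.trans ((mul_le_mul_of_nonneg_left (add_le_add (norm_fst_le _) (norm_snd_le _))
        (mul_nonneg (by norm_num) φ.opNorm_nonneg)).trans_eq (double _)))
  exact ⟨f, fun x hx => hf (sample ⟨x, hx⟩) (Submodule.subset_span ⟨⟨x, hx⟩, rfl⟩)⟩

end HermitianForms

section Factorization

theorem exists_hasSum_conj_mul_of_core {V : Type u} [AddCommGroup V] [Module ℂ V]
    (c : PreInnerProductSpace.Core ℂ V) :
    ∃ (I : Type u) (f : I → V →ₗ[ℂ] ℂ),
      ∀ x y, HasSum (fun i => starRingEnd ℂ (f i x) * f i y) (c.inner x y) := by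
  let : SeminormedAddCommGroup V := InnerProductSpace.Core.toSeminormedAddCommGroup (c := c)
  let : InnerProductSpace ℂ V := InnerProductSpace.ofCore c
  obtain ⟨I, b, -⟩ := exists_hilbertBasis ℂ (UniformSpace.Completion V)
  refine ⟨I, fun i => (innerSL ℂ (b i) ∘L UniformSpace.Completion.toComplL).toLinearMap,
    fun x y => ?_⟩
  have := b.hasSum_inner_mul_inner (x : UniformSpace.Completion V) (y : UniformSpace.Completion V)
  rw [UniformSpace.Completion.inner_coe] at this
  simpa using! this

theorem exists_strongDual_hasSum_conj_mul {W : Type u} [SeminormedAddCommGroup W]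
    [NormedSpace ℂ W] (Q : W →L⋆[ℂ] W →L[ℂ] ℂ) (symm : ∀ x y, starRingEnd ℂ (Q y x) = Q x y)
    (nonneg : ∀ x, 0 ≤ (Q x x).re) :
    ∃ (I : Type u) (f : I → StrongDual ℂ W),
      ∀ x y, HasSum (fun i => starRingEnd ℂ (f i x) * f i y) (Q x y) := by
  obtain ⟨I, f, hf⟩ := exists_hasSum_conj_mul_of_core
    { inner x y := Q x y
      conj_inner_symm := symm
      re_inner_nonneg := nonneg
      add_left := by simp
      smul_left := by simp : PreInnerProductSpace.Core ℂ W }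
  have sq_le (i x) : ‖f i x‖ ^ 2 ≤ ‖Q‖ * ‖x‖ ^ 2 := by
    have diagonal : HasSum (fun j => ‖f j x‖ ^ 2) (Q x x).re := by
      have := Complex.hasSum_re (hf x x)
      simp only [Complex.conj_mul', ← Complex.ofReal_pow, Complex.ofReal_re] at this
      exact this
    calc ‖f i x‖ ^ 2 ≤ (Q x x).re := le_hasSum diagonal i fun j _ => sq_nonneg _
      _ ≤ ‖Q x x‖ := Complex.re_le_norm _
      _ ≤ ‖Q‖ * ‖x‖ ^ 2 := by rw [sq, ← mul_assoc]; exact Q.le_opNorm₂ x x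
  have le (i x) : ‖f i x‖ ≤ √‖Q‖ * ‖x‖ := by
    rw [← sq_le_sq₀ (norm_nonneg _) (by positivity), mul_pow, Real.sq_sqrt Q.opNorm_nonneg]
    exact sq_le i x
  exact ⟨I, fun i => (f i).mkContinuous _ (le i), hf⟩

theorem exists_strongDual_hasSum_conj_mul_of_mem {W : Type u} [SeminormedAddCommGroup W]
    [NormedSpace ℂ W] (K : Submodule ℂ W) (Q : W →L⋆[ℂ] W →L[ℂ] ℂ)
    (symm : ∀ x ∈ K, ∀ y ∈ K, starRingEnd ℂ (Q y x) = Q x y) (nonneg : ∀ x ∈ K, 0 ≤ (Q x x).re) :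
    ∃ (I : Type u) (f : I → StrongDual ℂ W),
      ∀ x ∈ K, ∀ y ∈ K, HasSum (fun i => starRingEnd ℂ (f i x) * f i y) (Q x y) := by
  obtain ⟨I, f, hf⟩ := exists_strongDual_hasSum_conj_mul (Q.bilinearComp K.subtypeL K.subtypeL)
    (fun x y => symm x x.2 y y.2) (fun x => nonneg x x.2)
  choose g hg using fun i => exists_extension_norm_eq K (f i)
  refine ⟨I, g, fun x hx y hy => ?_⟩
  simpa [← hg] using hf ⟨x, hx⟩ ⟨y, hy⟩

end Factorization

section Decomposition

variable {H : Type u} [NormedAddCommGroup H] [InnerProductSpace ℂ H] [CompleteSpace H]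

/-- The sesquilinear form `(x, y) ↦ g (star x * y, y * star x)`. -/
def mulStarForm (g : StrongDual ℂ ((H →L[ℂ] H) × (H →L[ℂ] H))) :
    (H →L[ℂ] H) →L⋆[ℂ] (H →L[ℂ] H) →L[ℂ] ℂ :=
  (compL ℂ _ _ ℂ (g ∘L inl ℂ _ _) ∘L mul ℂ _ +
      compL ℂ _ _ ℂ (g ∘L inr ℂ _ _) ∘L (mul ℂ _).flip).comp
    ((starL ℂ : (H →L[ℂ] H) ≃L⋆[ℂ] (H →L[ℂ] H)) : (H →L[ℂ] H) →L⋆[ℂ] (H →L[ℂ] H))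

theorem mulStarForm_apply (g : StrongDual ℂ ((H →L[ℂ] H) × (H →L[ℂ] H))) (x y : H →L[ℂ] H) :
    mulStarForm g x y = g (star x * y, y * star x) := by
  change g (star x * y, 0) + g (0, y * star x) = _
  simp [← map_add]

theorem conj_mulStarForm_apply {g : StrongDual ℂ ((H →L[ℂ] H) × (H →L[ℂ] H))}
    (hg : conjFunctional g = g) (x y : H →L[ℂ] H) :
    starRingEnd ℂ (mulStarForm g y x) = mulStarForm g x y := by
  nth_rw 2 [← hg]
  simp [mulStarForm_apply, conjFunctional_apply, Prod.star_def]

variable (φ : (H →L[ℂ] H) →L[ℂ] (H →L[ℂ] H) →L[ℂ] ℂ)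

/-- The sesquilinear form `(x, y) ↦ φ y (star x)`. -/
def starForm : (H →L[ℂ] H) →L⋆[ℂ] (H →L[ℂ] H) →L[ℂ] ℂ :=
  φ.flip.comp ((starL ℂ : (H →L[ℂ] H) ≃L⋆[ℂ] (H →L[ℂ] H)) : (H →L[ℂ] H) →L⋆[ℂ] (H →L[ℂ] H))

theorem starForm_apply (x y : H →L[ℂ] H) : starForm φ x y = φ y (star x) :=
  rfl

theorem exists_hasSum_conj_mul_and_sub_starForm
    (hφ : ∀ p q : H →L[ℂ] H, IsStarProjection p → IsStarProjection q →
      φ p q = starRingEnd ℂ (φ q p)) :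
    ∃ (Q : (H →L[ℂ] H) →L⋆[ℂ] (H →L[ℂ] H) →L[ℂ] ℂ) (I₁ I₂ : Type u)
      (f : I₁ → StrongDual ℂ (H →L[ℂ] H)) (g : I₂ → StrongDual ℂ (H →L[ℂ] H)),
      ∀ x y : H →L[ℂ] H, IsCompactOperator x → IsCompactOperator y →
        HasSum (fun i => starRingEnd ℂ (f i x) * f i y) (Q x y) ∧
        HasSum (fun i => starRingEnd ℂ (g i x) * g i y) (Q x y - starForm φ x y) := by
  obtain ⟨F, hF⟩ := exists_re_le_strongDual_real φ
  obtain ⟨G, G_conj, G_re⟩ := exists_conjFunctional_eq_and_re_eq F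
  have G_dominates {x : H →L[ℂ] H} (hx : IsCompactOperator x) :
      max (φ x (star x)).re 0 ≤ (mulStarForm G x x).re := by
    rw [mulStarForm_apply, G_re _ (by simp [Prod.star_def])]
    exact hF x hx
  obtain ⟨I₁, f, hf⟩ := exists_strongDual_hasSum_conj_mul_of_mem (compactOperator (.id ℂ) H H)
    (mulStarForm G) (fun x _ y _ => conj_mulStarForm_apply G_conj x y)
    (fun x hx => (le_max_right _ _).trans (G_dominates hx))
  obtain ⟨I₂, g, hg⟩ := exists_strongDual_hasSum_conj_mul_of_mem (compactOperator (.id ℂ) H H)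
    (mulStarForm G - starForm φ)
    (fun x hx y hy => by
      simp only [sub_apply, map_sub, conj_mulStarForm_apply G_conj, starForm_apply,
        apply_eq_conj_apply_star φ hφ hx (isCompactOperator_star hy), star_star,
        Complex.conj_conj])
    (fun x hx => by
      rw [sub_apply, sub_apply, Complex.sub_re, sub_nonneg]
      exact (le_max_left _ _).trans (G_dominates hx))
  exact ⟨mulStarForm G, I₁, I₂, f, g, fun x y hx hy => ⟨hf x hx y hy, hg x hx y hy⟩⟩

theorem exists_hasSum_sub
    (hφ : ∀ p q : H →L[ℂ] H, IsStarProjection p → IsStarProjection q →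
      φ p q = starRingEnd ℂ (φ q p)) :
    ∃ (I : Type u) (f g : I → StrongDual ℂ (H →L[ℂ] H)),
      (∀ x : H →L[ℂ] H, IsCompactOperator x → Summable fun i => ‖f i x‖ ^ 2) ∧
      (∀ x : H →L[ℂ] H, IsCompactOperator x → Summable fun i => ‖g i x‖ ^ 2) ∧
      ∀ x y : H →L[ℂ] H, IsCompactOperator x → IsCompactOperator y →
        HasSum (fun i => f i x * conjFunctional (f i) y - g i x * conjFunctional (g i) y)
          (φ x y) := by
  obtain ⟨Q, I₁, I₂, f, g, h⟩ := exists_hasSum_conj_mul_and_sub_starForm φ hφ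
  let f' : I₁ ⊕ I₂ → StrongDual ℂ (H →L[ℂ] H) := Sum.elim f 0
  let g' : I₁ ⊕ I₂ → StrongDual ℂ (H →L[ℂ] H) := Sum.elim 0 g
  have square_summable {I : Type u} {f : I → StrongDual ℂ (H →L[ℂ] H)} {x : H →L[ℂ] H} {a : ℂ}
      (h : HasSum (fun i => starRingEnd ℂ (f i x) * f i x) a) : Summable fun i => ‖f i x‖ ^ 2 := by
    simpa [← sq] using h.summable.norm
  refine ⟨I₁ ⊕ I₂, f', g', fun x hx => ?_, fun x hx => ?_, fun x y hx hy => ?_⟩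
  · exact .sum _ (square_summable (h x x hx hx).1) (by simp [f', Function.comp_def])
  · exact .sum _ (by simp [g', Function.comp_def]) (square_summable (h x x hx hx).2)
  · obtain ⟨hf, hg⟩ := h (star y) x (isCompactOperator_star hy) hx
    have inl_sum : HasSum (fun i => f i x * conjFunctional (f i) y) (Q (star y) x) := by
      simpa [conjFunctional_apply, mul_comm] using hf
    have inr_sum : HasSum (fun i => -(g i x * conjFunctional (g i) y))
        (-(Q (star y) x - φ x y)) := by
      simpa only [conjFunctional_apply, mul_comm, starForm_apply, star_star] using hg.neg
    rw [← sub_sub_self (Q (star y) x) (φ x y), sub_eq_add_neg]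
    exact HasSum.sum (by simpa [f', g', Function.comp_def] using! inl_sum)
      (by simpa [f', g', Function.comp_def] using! inr_sum)

end Decomposition

section Density

open InnerProductSpace

variable {H : Type*} [NormedAddCommGroup H] [InnerProductSpace ℂ H] [CompleteSpace H]

/-- The operator `T` with `⟪v, T u⟫ = B v u`, as a continuous linear function of the bounded
sesquilinear form `B`. -/
def operatorOfForm : (H →L⋆[ℂ] H →L[ℂ] ℂ) →L[ℂ] (H →L[ℂ] H) :=
  ((adjoint : (H →L[ℂ] H) ≃ₗᵢ⋆[ℂ] (H →L[ℂ] H)).toContinuousLinearEquiv :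
      (H →L[ℂ] H) →L⋆[ℂ] (H →L[ℂ] H)).comp
    (compSL H (StrongDual ℂ H) H (starRingEnd ℂ) (starRingEnd ℂ)
      ((toDual ℂ H).symm.toContinuousLinearEquiv : StrongDual ℂ H →L⋆[ℂ] H))

theorem inner_operatorOfForm (B : H →L⋆[ℂ] H →L[ℂ] ℂ) (v u : H) :
    ⟪v, operatorOfForm B u⟫ = B v u :=
  (adjoint_inner_right _ _ _).trans (continuousLinearMapOfBilin_apply B v u)

/-- The density of a bounded functional `Φ` on operators: the operator `T` with
`Φ S = tr (S T)` for all compact `S`. -/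
def density : StrongDual ℂ (H →L[ℂ] H) →L[ℂ] (H →L[ℂ] H) :=
  operatorOfForm ∘L (compSL H (H →L[ℂ] H →L[ℂ] H) (H →L[ℂ] ℂ) (starRingEnd ℂ) (.id ℂ)).flip
    (rankOne ℂ).flip ∘L compL ℂ H (H →L[ℂ] H) ℂ

variable (Φ : StrongDual ℂ (H →L[ℂ] H))

theorem inner_density (u v : H) : ⟪v, density Φ u⟫ = Φ (rankOne ℂ u v) :=
  inner_operatorOfForm _ v u

theorem density_conjFunctional : density (conjFunctional Φ) = adjoint (density Φ) := by
  refine ContinuousLinearMap.ext fun u => ext_inner_left ℂ fun v => ?_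
  rw [inner_density, conjFunctional_apply, star_eq_adjoint, adjoint_rankOne,
    ← inner_density, inner_conj_symm, adjoint_inner_right]

theorem hasSum_inner_mul_density {ι : Type*} (b : HilbertBasis ι ℂ H) {S : H →L[ℂ] H}
    (hS : IsCompactOperator S) : HasSum (fun i => ⟪b i, (S * density Φ) (b i)⟫) (Φ S) := by
  refine ((Φ.continuous.tendsto S).comp (tendsto_basisProj_mul b hS)).congr fun s => ?_
  rw [Function.comp_apply, basisProj_mul, map_sum]
  refine Finset.sum_congr rfl fun i _ => ?_
  rw [← inner_density, star_eq_adjoint, adjoint_inner_left]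
  rfl

theorem traceAlong_mul_density {ι : Type*} (b : HilbertBasis ι ℂ H) {S : H →L[ℂ] H}
    (hS : IsCompactOperator S) : traceAlong b (S * density Φ) = Φ S :=
  (hasSum_inner_mul_density Φ b hS).tsum_eq

theorem isTraceClass_density : IsTraceClass (density Φ) := by
  refine ⟨‖Φ‖, fun n e f he hf => ?_⟩
  choose c norm_c hc using fun i => RCLike.exists_norm_eq_mul_self ⟪e i, density Φ (f i)⟫
  have hΦ : Φ (∑ i, c i • rankOne ℂ (f i) (e i)) = (∑ i, ‖⟪e i, density Φ (f i)⟫‖ : ℝ) := by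
    simp only [map_sum, map_smul, smul_eq_mul, ← inner_density, Complex.ofReal_sum]
    exact Finset.sum_congr rfl fun i _ => (hc i).symm
  calc ∑ i, ‖⟪e i, density Φ (f i)⟫‖
      = ‖Φ (∑ i, c i • rankOne ℂ (f i) (e i))‖ := by
        rw [hΦ, Complex.norm_of_nonneg (by positivity)]
    _ ≤ ‖Φ‖ * 1 :=
        Φ.le_opNorm_of_le (norm_sum_smul_rankOne_le he hf (fun i => (norm_c i).le) _)
    _ = ‖Φ‖ := mul_one _

end Density

section TensorProducts

open InnerProductSpace

variable {H K : Type u} [NormedAddCommGroup H] [InnerProductSpace ℂ H]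
  [NormedAddCommGroup K] [InnerProductSpace ℂ K]

namespace HilbertTensorProduct

variable (J : HilbertTensorProduct H K)

theorem clm_ext {W : Type*} [NormedAddCommGroup W] [NormedSpace ℂ W] {S T : K →L[ℂ] W}
    (h : ∀ a b, S (J.tmul a b) = T (J.tmul a b)) : S = T :=
  ContinuousLinearMap.ext_on J.dense_span <| Set.forall_mem_range.2 fun z => h z.1 z.2

theorem ext_inner_tmul {v w : K} (h : ∀ a b, ⟪J.tmul a b, v⟫ = ⟪J.tmul a b, w⟫) : v = w := by
  have : innerSL ℂ v = innerSL ℂ w := J.clm_ext fun a b => by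
    simpa using congrArg (starRingEnd ℂ) (h a b)
  exact ext_inner_right ℂ fun z => DFunLike.congr_fun this z

theorem norm_tmul (a b : H) : ‖J.tmul a b‖ = ‖a‖ * ‖b‖ := by
  have h := J.inner_tmul a b a b
  simp only [inner_self_eq_norm_sq_to_K, ← mul_pow] at h
  rw [← sq_eq_sq₀ (norm_nonneg _) (by positivity)]
  exact_mod_cast h

/-- The tensor product of vectors as a continuous bilinear map. -/
def tmulL : H →L[ℂ] H →L[ℂ] K :=
  LinearMap.mkContinuous₂ J.tmul 1 fun a b => by rw [J.norm_tmul, one_mul]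

theorem tmulL_apply (a b : H) : J.tmulL a b = J.tmul a b :=
  rfl

theorem continuous_of_continuous_apply_tmul {V : Type*} [NormedAddCommGroup V] [NormedSpace ℂ V]
    [CompleteSpace V] [CompleteSpace K] (L : V →ₗ[ℂ] K →L[ℂ] K)
    (hL : ∀ a b, Continuous fun v => L v (J.tmul a b)) : Continuous L := by
  refine LinearMap.continuous_of_seq_closed_graph (g := L) fun s x T hs hT =>
    J.clm_ext fun a b => ?_
  exact tendsto_nhds_unique (((apply ℂ K (J.tmul a b)).continuous.tendsto T).comp hT)
    (((hL a b).tendsto x).comp hs)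

variable [CompleteSpace H] [CompleteSpace K]

/-- The sesquilinear form `(v, u) ↦ f (adjoint (v ⊗ ·) ∘ R ∘ (u ⊗ ·))`, as a continuous linear
function of `R`. -/
def sliceForm (f : StrongDual ℂ (H →L[ℂ] H)) : (K →L[ℂ] K) →L[ℂ] (H →L⋆[ℂ] H →L[ℂ] ℂ) :=
  let adjointTmul : H →L⋆[ℂ] (K →L[ℂ] H) :=
    ((adjoint : (H →L[ℂ] K) ≃ₗᵢ⋆[ℂ] (K →L[ℂ] H)).toContinuousLinearEquiv :
      (H →L[ℂ] K) →L⋆[ℂ] (K →L[ℂ] H)).comp J.tmulL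
  let pairing : (H →L[ℂ] K) →L[ℂ] (K →L[ℂ] H) →L[ℂ] ℂ :=
    (compL ℂ (H →L[ℂ] K) (H →L[ℂ] H) ℂ f ∘L compL ℂ H K H).flip
  (compSL H (K →L[ℂ] H) (H →L[ℂ] ℂ) (starRingEnd ℂ) (.id ℂ)).flip adjointTmul ∘L
    (flipₗᵢ ℂ H (K →L[ℂ] H) ℂ : (H →L[ℂ] (K →L[ℂ] H) →L[ℂ] ℂ) →L[ℂ] (K →L[ℂ] H) →L[ℂ] H →L[ℂ] ℂ)
    ∘L compL ℂ H (H →L[ℂ] K) ((K →L[ℂ] H) →L[ℂ] ℂ) pairing ∘L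
    (compL ℂ H (H →L[ℂ] K) (H →L[ℂ] K)).flip J.tmulL ∘L compL ℂ H K K

theorem sliceForm_apply (f : StrongDual ℂ (H →L[ℂ] H)) (R : K →L[ℂ] K) (v u : H) :
    J.sliceForm f R v u = f (adjoint (J.tmulL v) ∘L R ∘L J.tmulL u) :=
  rfl

end HilbertTensorProduct

namespace OperatorTensor

variable (J : OperatorTensor H K)

/-- The operator tensor product as a bilinear map. -/
def opBilin : (H →L[ℂ] H) →ₗ[ℂ] (H →L[ℂ] H) →ₗ[ℂ] (K →L[ℂ] K) :=
  LinearMap.mk₂ ℂ J.op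
    (fun _ _ _ => J.clm_ext fun a b => by simp [J.op_tmul])
    (fun _ _ _ => J.clm_ext fun a b => by simp [J.op_tmul])
    (fun _ _ _ => J.clm_ext fun a b => by simp [J.op_tmul])
    (fun _ _ _ => J.clm_ext fun a b => by simp [J.op_tmul])

theorem opBilin_apply (x y : H →L[ℂ] H) : J.opBilin x y = J.op x y :=
  rfl

theorem op_rankOne (a b c d : H) :
    J.op (rankOne ℂ a c) (rankOne ℂ b d) = rankOne ℂ (J.tmul a b) (J.tmul c d) :=
  J.clm_ext fun u v => by simp [J.op_tmul, J.inner_tmul, smul_smul, mul_comm]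

variable [CompleteSpace H] [CompleteSpace K]

theorem continuous_opBilin_left (y : H →L[ℂ] H) : Continuous (J.opBilin.flip y) :=
  J.continuous_of_continuous_apply_tmul _ fun a b => by
    have := (J.tmulL.flip (y b)).continuous.comp (apply ℂ H a).continuous
    simpa [Function.comp_def, opBilin_apply, J.op_tmul, J.tmulL_apply] using! this

theorem continuous_opBilin_right (x : H →L[ℂ] H) : Continuous (J.opBilin x) :=
  J.continuous_of_continuous_apply_tmul _ fun a b => by
    have := (J.tmulL (x a)).continuous.comp (apply ℂ H b).continuous
    simpa [Function.comp_def, opBilin_apply, J.op_tmul, J.tmulL_apply] using! this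

theorem isCompactOperator_op {x y : H →L[ℂ] H} (hx : IsCompactOperator x)
    (hy : IsCompactOperator y) : IsCompactOperator (J.op x y) := by
  have rankOne_op (u : H) : IsCompactOperator (J.op (rankOne ℂ u u) y) :=
    compactOperator_le_of_isClosed
      (W := (compactOperator (.id ℂ) K K).comap (J.opBilin (rankOne ℂ u u)))
      (isClosed_setOfPred_isCompactOperator.preimage (J.continuous_opBilin_right _))
      (fun v _ => by
        rw [Submodule.mem_comap, opBilin_apply, op_rankOne]
        exact isCompactOperator_rankOne _ _) hy
  exact compactOperator_le_of_isClosed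
    (W := (compactOperator (.id ℂ) K K).comap (J.opBilin.flip y))
    (isClosed_setOfPred_isCompactOperator.preimage (J.continuous_opBilin_left y))
    (fun u _ => rankOne_op u) hx

theorem operatorOfForm_sliceForm_op (f : StrongDual ℂ (H →L[ℂ] H)) (x y : H →L[ℂ] H) :
    operatorOfForm (J.sliceForm f (J.op x y)) = f y • x := by
  have slice_op (v u : H) : adjoint (J.tmulL v) ∘L J.op x y ∘L J.tmulL u = ⟪v, x u⟫ • y := by
    refine ContinuousLinearMap.ext fun a => ext_inner_left ℂ fun b => ?_
    simp [adjoint_inner_right, J.tmulL_apply, J.op_tmul, J.inner_tmul, inner_smul_right]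
  refine ContinuousLinearMap.ext fun u => ext_inner_left ℂ fun v => ?_
  rw [inner_operatorOfForm, J.sliceForm_apply, slice_op, map_smul, smul_apply, inner_smul_right,
    smul_eq_mul, mul_comm]

/-- The functional `f ⊗ g` on operators on the tensor product, with `x ⊗ y ↦ f x * g y`. -/
def productFunctional (f g : StrongDual ℂ (H →L[ℂ] H)) : StrongDual ℂ (K →L[ℂ] K) :=
  f ∘L operatorOfForm ∘L J.sliceForm g

theorem productFunctional_op (f g : StrongDual ℂ (H →L[ℂ] H)) (x y : H →L[ℂ] H) :
    J.productFunctional f g (J.op x y) = f x * g y := by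
  change f (operatorOfForm (J.sliceForm g (J.op x y))) = _
  rw [operatorOfForm_sliceForm_op, map_smul, smul_eq_mul, mul_comm]

theorem density_productFunctional (f g : StrongDual ℂ (H →L[ℂ] H)) :
    density (J.productFunctional f g) = J.op (density f) (density g) :=
  J.clm_ext fun a b => J.ext_inner_tmul fun c d => by
    rw [inner_density, ← J.op_rankOne, productFunctional_op, J.op_tmul, J.inner_tmul,
      inner_density, inner_density]

end OperatorTensor

end TensorProducts

section Beta

variable {H K : Type u} [NormedAddCommGroup H] [InnerProductSpace ℂ H]
  [NormedAddCommGroup K] [InnerProductSpace ℂ K]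

theorem OperatorTensor.compactSpan_le_compactOperator [CompleteSpace H] [CompleteSpace K]
    (J : OperatorTensor H K) : J.compactSpan ≤ compactOperator (.id ℂ) K K := by
  refine Submodule.span_le.2 ?_
  rintro _ ⟨x, y, hx, hy, rfl⟩
  exact J.isCompactOperator_op hx hy

theorem IsBetaFor.hasSum {J : OperatorTensor H K} {D : (H →L[ℂ] H) →ₗ[ℂ] (H →L[ℂ] H) →ₗ[ℂ] ℂ}
    {β : ↥J.compactSpan →ₗ[ℂ] ℂ} (hβ : IsBetaFor J D β) {I : Type*}
    {Ψ : I → StrongDual ℂ (K →L[ℂ] K)}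
    (hΨ : ∀ x y : H →L[ℂ] H, IsCompactOperator x → IsCompactOperator y →
      HasSum (fun i => Ψ i (J.op x y)) (D x y)) (S : J.compactSpan) :
    HasSum (fun i => Ψ i S) (β S) := by
  obtain ⟨S, hS⟩ := S
  induction hS using Submodule.span_induction with
  | mem S hS =>
    obtain ⟨x, y, hx, hy, rfl⟩ := hS
    convert hΨ x y hx hy using 1
    exact hβ x y hx hy _
  | zero =>
    have : β ⟨0, zero_mem _⟩ = 0 := map_zero β
    simp [this]
  | add S T hS hT ihS ihT =>
    have : β ⟨S + T, add_mem hS hT⟩ = β ⟨S, hS⟩ + β ⟨T, hT⟩ := map_add β ⟨S, hS⟩ ⟨T, hT⟩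
    simpa only [this, map_add] using ihS.add ihT
  | smul c S hS ih =>
    have : β ⟨c • S, Submodule.smul_mem _ c hS⟩ = c • β ⟨S, hS⟩ := map_smul β c ⟨S, hS⟩
    simpa only [this, map_smul] using ih.const_smul c

end Beta

section Representation

variable {H K : Type u} [NormedAddCommGroup H] [InnerProductSpace ℂ H] [CompleteSpace H]
  [NormedAddCommGroup K] [InnerProductSpace ℂ K] [CompleteSpace K]

theorem exists_eq_of_isBoundedBilinear {D : (H →L[ℂ] H) →ₗ[ℂ] (H →L[ℂ] H) →ₗ[ℂ] ℂ}
    (hD : IsBoundedBilinear D) :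
    ∃ φ : (H →L[ℂ] H) →L[ℂ] (H →L[ℂ] H) →L[ℂ] ℂ, ∀ x y, φ x y = D x y :=
  let ⟨C, hC⟩ := hD
  ⟨LinearMap.mkContinuous₂ D C hC, fun _ _ => rfl⟩

theorem stmt_11_general (J : OperatorTensor H K)
    (D : (H →L[ℂ] H) →ₗ[ℂ] (H →L[ℂ] H) →ₗ[ℂ] ℂ) (hD : IsBoundedBilinear D)
    (hermitian : ∀ p q, IsOrthoProj p → IsOrthoProj q → D p q = starRingEnd ℂ (D q p))
    (β : ↥J.compactSpan →ₗ[ℂ] ℂ) (hβ : IsBetaFor J D β)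
    {ιH ιK : Type*} (bH : HilbertBasis ιH ℂ H) (bK : HilbertBasis ιK ℂ K) :
    ∃ (I : Type u) (X Y : I → H →L[ℂ] H),
      (∀ i, IsTraceClass (X i)) ∧ (∀ i, IsTraceClass (Y i)) ∧
      (∀ x : H →L[ℂ] H, IsCompactOperator x →
        Summable fun i => ‖traceAlong bH (x * X i)‖ ^ 2) ∧
      (∀ y : H →L[ℂ] H, IsCompactOperator y →
        Summable fun i => ‖traceAlong bH (y * Y i)‖ ^ 2) ∧
      ∀ S : J.compactSpan,
        Summable (fun i => ‖traceAlong bK ((S : K →L[ℂ] K) *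
          (J.op (X i) (adjoint (X i)) - J.op (Y i) (adjoint (Y i))))‖) ∧
        HasSum (fun i => traceAlong bK ((S : K →L[ℂ] K) *
          (J.op (X i) (adjoint (X i)) - J.op (Y i) (adjoint (Y i))))) (β S) := by
  obtain ⟨φ, hφ⟩ := exists_eq_of_isBoundedBilinear hD
  obtain ⟨I, f, g, hf, hg, hfg⟩ := exists_hasSum_sub φ fun p q hp hq => by
    simpa only [hφ] using hermitian p q ⟨hp.isIdempotentElem, hp.isSelfAdjoint⟩
      ⟨hq.isIdempotentElem, hq.isSelfAdjoint⟩
  let Ψ (i : I) : StrongDual ℂ (K →L[ℂ] K) :=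
    J.productFunctional (f i) (conjFunctional (f i)) -
      J.productFunctional (g i) (conjFunctional (g i))
  have density_Ψ (i) : J.op (density (f i)) (adjoint (density (f i))) -
      J.op (density (g i)) (adjoint (density (g i))) = density (Ψ i) := by
    simp only [Ψ, map_sub, J.density_productFunctional, density_conjFunctional]
  have hasSum_Ψ : ∀ S : J.compactSpan, HasSum (fun i => Ψ i S) (β S) :=
    hβ.hasSum fun x y hx hy => by
      simpa only [Ψ, sub_apply, J.productFunctional_op, hφ] using hfg x y hx hy
  refine ⟨I, fun i => density (f i), fun i => density (g i), fun i => isTraceClass_density _,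
    fun i => isTraceClass_density _, fun x hx => ?_, fun y hy => ?_, fun S => ?_⟩
  · simpa only [traceAlong_mul_density _ bH hx] using hf x hx
  · simpa only [traceAlong_mul_density _ bH hy] using hg y hy
  · simp only [density_Ψ, traceAlong_mul_density _ bK (J.compactSpan_le_compactOperator S.2)]
    exact ⟨(hasSum_Ψ S).summable.norm, hasSum_Ψ S⟩

end Representation

/-- For a bounded decoherence functional `d` on a Hilbert space
of dimension greater than two, with associated functional `β` on
`K(𝔥) • K(𝔥)`, there are families `{𝔛ᵢ}, {𝔜ᵢ}` of trace class operators with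
`∑ᵢ |tr(x 𝔛ᵢ)|²` and `∑ᵢ |tr(y 𝔜ᵢ)|²` convergent for compact `x, y`, and
`β(S) = ∑ᵢ tr(S (𝔛ᵢ ⊗ 𝔛ᵢ* − 𝔜ᵢ ⊗ 𝔜ᵢ*))` absolutely convergent for every
`S ∈ K(𝔥) • K(𝔥)`. -/
theorem stmt_11 (hdim : 2 < Module.rank ℂ E)
    (d : (E →L[ℂ] E) → (E →L[ℂ] E) → ℂ)
    (hd : IsDecoherenceFunctional d) (hbd : DFBounded d)
    (J : OperatorTensor E G)
    (D : (E →L[ℂ] E) →ₗ[ℂ] (E →L[ℂ] E) →ₗ[ℂ] ℂ)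
    (hD : IsBoundedBilinear D) (hDd : ExtendsDF D d)
    (β : ↥J.compactSpan →ₗ[ℂ] ℂ) (hβ : IsBetaFor J D β)
    {ιE ιG : Type u} (bE : HilbertBasis ιE ℂ E) (bG : HilbertBasis ιG ℂ G) :
    ∃ (I : Type u) (X Y : I → E →L[ℂ] E),
      (∀ i, IsTraceClass (X i)) ∧ (∀ i, IsTraceClass (Y i)) ∧
      (∀ x : E →L[ℂ] E, IsCompactOperator (⇑x) →
        Summable fun i => ‖traceAlong bE (x * X i)‖ ^ 2) ∧
      (∀ y : E →L[ℂ] E, IsCompactOperator (⇑y) →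
        Summable fun i => ‖traceAlong bE (y * Y i)‖ ^ 2) ∧
      ∀ S : J.compactSpan,
        Summable (fun i => ‖traceAlong bG ((S : G →L[ℂ] G) *
          (J.op (X i) (adjoint (X i)) - J.op (Y i) (adjoint (Y i))))‖) ∧
        HasSum (fun i => traceAlong bG ((S : G →L[ℂ] G) *
          (J.op (X i) (adjoint (X i)) - J.op (Y i) (adjoint (Y i))))) (β S) := by
  exact stmt_11_general J D hD (fun p q hp hq => by
    rw [hDd p q hp hq, hDd q p hq hp, hd.hermitian p q hp hq]) β hβ bE bG
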